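/- arXiv:2605.07322 — 3 statements merged into one kernel-verified Lean document; each statement's English description precedes it below -/
import Mathlib

section
/- Let n ≥ 4 be an even integer and let G be an n-vertex graph with minimum degree δ(G) ≥ n/2 + 2. Then for every edge-coloring of G with 2 colors, G contains an even-chromatic Hamilton cycle. Equivalently, the sparse odd-Ramsey number of Hamilton cycles satisfies r_odd(n, n/2+2; C_n) ≥ 3. -/
/-!
Suppose all Hamiltonian cycles of `G` have the same weight under an edge labelling `χ` with values
in an abelian group. By an Ore-type argument, any two vertices of `G` are joined by a path through
all vertices outside a small set `S`; hence two paths with the same ends and the same interior `S`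
have the same weight, since both extend to Hamiltonian cycles by a common path. Exchanges with
`#S ≤ 5` determine the alternating sums of `χ` along closed walks of length four, and show that a
fixed vertex `v` gives the same value `t` to every triangle and every closed walk of length five
through `v`. Consequently `χ s(u, w) = h u + h w + t` on all edges, so a Hamiltonian cycle of even
length has weight in `2A`. For two colours, read as the elements of `ℤ/2`, this rules out that all
Hamiltonian cycles have weight `1`, and weight `0` means that both colours occur evenly.
-/

section Walks

variable {V : Type*} [Fintype V] [DecidableEq V] {G : SimpleGraph V}

lemma isHamiltonian_of_forall_mem_support {x y : V} {w : G.Walk x y}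
    (hw : ∀ v, v ∈ w.support) (hlen : w.length + 1 = Fintype.card V) : w.IsHamiltonian :=
  SimpleGraph.Walk.isHamiltonian_iff_support_get_bijective.2 <|
    (Fintype.bijective_iff_surjective_and_card _).2
      ⟨fun v ↦ List.mem_iff_get.1 (hw v), by simpa using hlen⟩

lemma isHamiltonianCycle_of_forall_mem_support {a : V} {p : G.Walk a a}
    (hp : ∀ v, v ∈ p.support) (hlen : p.length = Fintype.card V) (hV : 3 ≤ Fintype.card V) :
    p.IsHamiltonianCycle := by
  have hnil : ¬ p.Nil := by
    rw [← SimpleGraph.Walk.length_eq_zero_iff]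
    lia
  have htail : p.tail.IsHamiltonian := by
    refine isHamiltonian_of_forall_mem_support (fun v ↦ ?_)
      ((SimpleGraph.Walk.length_tail_add_one hnil).trans hlen)
    obtain rfl | hv := List.mem_cons.1 (SimpleGraph.Walk.cons_support_tail hnil ▸ hp v)
    · exact p.tail.end_mem_support
    · exact hv
  exact ⟨SimpleGraph.Walk.isCycle_iff_isPath_tail_and_le_length.2
    ⟨htail.isPath, hlen ▸ hV⟩, htail⟩

end Walks

section Ore

variable {V : Type*}

/-- The involution of `ℕ` that reverses the block `i + 1, …, j` and fixes every other number. -/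
def reverseBlock (i j k : ℕ) : ℕ := if i < k ∧ k ≤ j then i + j + 1 - k else k

/-- The values `p 0, …, p n` list every element of `V` exactly once, starting at `x` and ending
at `y`; the values of `p` beyond `n` play no role. -/
structure IsEnumeration (p : ℕ → V) (n : ℕ) (x y : V) : Prop where
  bijOn : Set.BijOn p (Set.Iic n) Set.univ
  zero : p 0 = x
  last : p n = y

/-- The positions at which the sequence `p 0, …, p n` fails to be a walk in `G`. -/
def breaks (G : SimpleGraph V) [DecidableRel G.Adj] (p : ℕ → V) (n : ℕ) : Finset ℕ :=
  {k ∈ Finset.range n | ¬ G.Adj (p k) (p (k + 1))}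

lemma involutive_reverseBlock (i j : ℕ) : Function.Involutive (reverseBlock i j) := by
  intro k
  grind [reverseBlock]

lemma reverseBlock_le {i j n : ℕ} (hj : j < n) {k : ℕ} (hk : k ≤ n) :
    reverseBlock i j k ≤ n := by
  grind [reverseBlock]

lemma IsEnumeration.comp_reverseBlock {p : ℕ → V} {n : ℕ} {x y : V}
    (hp : IsEnumeration p n x y) {i j : ℕ} (hj : j < n) :
    IsEnumeration (p ∘ reverseBlock i j) n x y where
  bijOn := hp.bijOn.comp <| Set.InvOn.bijOn
    ⟨(involutive_reverseBlock i j).leftInverse.leftInvOn _,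
      (involutive_reverseBlock i j).rightInverse.rightInvOn _⟩
    (fun _ hk ↦ reverseBlock_le hj hk) (fun _ hk ↦ reverseBlock_le hj hk)
  zero := by simp [reverseBlock, hp.zero]
  last := by simp [reverseBlock, hj.not_ge, hp.last]

lemma exists_isEnumeration [Fintype V] {x y : V} (hxy : x ≠ y) :
    ∃ p : ℕ → V, IsEnumeration p (Fintype.card V - 1) x y := by
  classical
  have hcard : 1 < Fintype.card V := Fintype.one_lt_card_iff.2 ⟨x, y, hxy⟩
  have : Nonempty V := ⟨x⟩
  obtain ⟨p, hp⟩ := (Set.finite_Iic (Fintype.card V - 1)).exists_bijOn_of_encard_eq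
    (t := (Set.univ : Set V)) <| by
      rw [← Finset.coe_Iic, Set.encard_coe_eq_coe_finsetCard, Nat.card_Iic, Set.encard_univ,
        ENat.card_eq_coe_fintype_card, Nat.sub_add_cancel hcard.le]
  have hne : p 0 ≠ p (Fintype.card V - 1) := hp.injOn.ne (by simp) (by simp) (by lia)
  have := Equiv.Perm.isMultiplyPretransitive V 2
  obtain ⟨g, hgx, hgy⟩ := MulAction.is_two_pretransitive_iff.1 this hne hxy
  exact ⟨g ∘ p, (Set.bijOn_univ.2 g.bijective).comp hp, hgx, hgy⟩

lemma exists_walk_of_forall_adj_succ {G : SimpleGraph V} {p : ℕ → V} {n : ℕ}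
    (hp : ∀ k < n, G.Adj (p k) (p (k + 1))) :
    ∃ w : G.Walk (p 0) (p n), w.length = n ∧ ∀ k ≤ n, p k ∈ w.support := by
  induction n with
  | zero => exact ⟨.nil, by simp⟩
  | succ n ih =>
    obtain ⟨w, hlen, hw⟩ := ih fun k hk ↦ hp k (by lia)
    refine ⟨w.concat (hp n n.lt_succ_self), by simp [hlen], fun k hk ↦ ?_⟩
    rw [SimpleGraph.Walk.support_concat, List.mem_append]
    obtain hk | rfl := Nat.le_or_eq_of_le_succ hk
    · exact .inl (hw k hk)
    · simp

variable {G : SimpleGraph V} [DecidableRel G.Adj] {p : ℕ → V} {n : ℕ}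

lemma breaks_comp_reverseBlock_subset {i j : ℕ} (hij : i < j)
    (hi : G.Adj (p i) (p j)) (hj : G.Adj (p (i + 1)) (p (j + 1))) (hjn : j < n) :
    breaks G (p ∘ reverseBlock i j) n ⊆
      (breaks G p n \ {i, j}).image fun k ↦ if i < k ∧ k < j then i + j - k else k := by
  intro k hk
  refine Finset.mem_image.2 ⟨if i < k ∧ k < j then i + j - k else k, ?_, by grind⟩
  simp only [breaks, Finset.mem_sdiff, Finset.mem_filter, Finset.mem_range, Finset.mem_insert,
    Finset.mem_singleton, Function.comp_apply] at hk ⊢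
  obtain ⟨hkn, hk⟩ := hk
  grind [reverseBlock, G.adj_comm]

lemma card_breaks_comp_reverseBlock_lt {i j : ℕ} (hij : i < j)
    (hi : G.Adj (p i) (p j)) (hj : G.Adj (p (i + 1)) (p (j + 1))) (hjn : j < n)
    (hbreak : i ∈ breaks G p n ∨ j ∈ breaks G p n) :
    (breaks G (p ∘ reverseBlock i j) n).card < (breaks G p n).card := by
  calc (breaks G (p ∘ reverseBlock i j) n).card
      ≤ (breaks G p n \ {i, j}).card :=
        (Finset.card_le_card (breaks_comp_reverseBlock_subset hij hi hj hjn)).trans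
          Finset.card_image_le
    _ < (breaks G p n).card := Finset.card_lt_card <| by grind

lemma degree_eq_sum_of_bijOn [Fintype V] (hp : Set.BijOn p (Set.Iic n) Set.univ) (v : V) :
    G.degree v = ∑ k ∈ Finset.range (n + 1), if G.Adj v (p k) then 1 else 0 := by
  rw [← G.card_neighborFinset_eq_degree, G.neighborFinset_eq_filter, Finset.card_filter]
  have hcoe : (Finset.range (n + 1) : Set ℕ) = Set.Iic n := by
    ext
    simp
  exact (Finset.sum_nbij p (fun _ _ ↦ Finset.mem_univ _) (hcoe ▸ hp.injOn)
    (by simpa only [hcoe, Finset.coe_univ] using hp.surjOn) fun _ _ ↦ rfl).symm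

lemma exists_adj_adj_succ_of_bijOn [Fintype V] (hp : Set.BijOn p (Set.Iic n) Set.univ)
    {i : ℕ} (hi : i < n) (hdeg : n + 2 ≤ G.degree (p i) + G.degree (p (i + 1))) :
    ∃ k < n, G.Adj (p i) (p k) ∧ G.Adj (p (i + 1)) (p (k + 1)) := by
  by_contra! hno
  have hsum : ∑ k ∈ Finset.range n, ((if G.Adj (p i) (p k) then 1 else 0) +
      if G.Adj (p (i + 1)) (p (k + 1)) then 1 else 0) < ∑ _k ∈ Finset.range n, 1 := by
    refine Finset.sum_lt_sum (fun k hk ↦ ?_) ⟨i, Finset.mem_range.2 hi, by simp⟩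
    grind
  rw [degree_eq_sum_of_bijOn hp, degree_eq_sum_of_bijOn hp, Finset.sum_range_succ,
    Finset.sum_range_succ'] at hdeg
  rw [Finset.sum_add_distrib, ← Finset.card_eq_sum_ones, Finset.card_range] at hsum
  split_ifs at hdeg <;> lia

lemma IsEnumeration.exists_isHamiltonian [Fintype V] [DecidableEq V] {x y : V}
    (hp : IsEnumeration p (Fintype.card V - 1) x y)
    (hbreaks : breaks G p (Fintype.card V - 1) = ∅) :
    ∃ w : G.Walk x y, w.IsHamiltonian := by
  have hV : 0 < Fintype.card V := Fintype.card_pos_iff.2 ⟨x⟩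
  obtain ⟨w, hlen, hw⟩ := exists_walk_of_forall_adj_succ (G := G) (p := p) fun k hk ↦ by
    by_contra hadj
    exact Finset.notMem_empty k (hbreaks ▸ Finset.mem_filter.2 ⟨Finset.mem_range.2 hk, hadj⟩)
  refine ⟨w.copy hp.zero hp.last, isHamiltonian_of_forall_mem_support (fun v ↦ ?_) ?_⟩
  · obtain ⟨k, hk, rfl⟩ := hp.bijOn.surjOn (Set.mem_univ v)
    simpa using hw k hk
  · simpa [hlen] using Nat.sub_add_cancel hV

theorem exists_isHamiltonian_of_card_lt_degree_add_degree [Fintype V] [DecidableEq V]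
    (hG : ∀ u v, u ≠ v → ¬ G.Adj u v → Fintype.card V < G.degree u + G.degree v)
    {x y : V} (hxy : x ≠ y) : ∃ w : G.Walk x y, w.IsHamiltonian := by
  set n := Fintype.card V - 1
  -- Reversing a suitable block removes a break, so an enumeration with the fewest breaks has none.
  obtain ⟨p, hp, hmin⟩ := exists_minimalFor_of_wellFoundedLT (IsEnumeration · n x y)
    (fun p ↦ (breaks G p n).card) (exists_isEnumeration hxy)
  refine hp.exists_isHamiltonian (Finset.eq_empty_of_forall_notMem fun i hi ↦ ?_)
  have hreverse {j k : ℕ} (hjk : j < k) (hkn : k < n) (hj : G.Adj (p j) (p k))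
      (hk : G.Adj (p (j + 1)) (p (k + 1))) (hbreak : j = i ∨ k = i) : False :=
    have hlt := card_breaks_comp_reverseBlock_lt hjk hj hk hkn
      (hbreak.imp (· ▸ hi) (· ▸ hi))
    hlt.not_ge (hmin (hp.comp_reverseBlock hkn) hlt.le)
  obtain ⟨hin, hnadj⟩ := Finset.mem_filter.1 hi
  have hin := Finset.mem_range.1 hin
  have hne : p i ≠ p (i + 1) :=
    hp.bijOn.injOn.ne (Set.mem_Iic.2 hin.le) (Set.mem_Iic.2 hin) i.succ_ne_self.symm
  have hdeg := hG (p i) (p (i + 1)) hne hnadj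
  obtain ⟨k, hkn, hik, hik'⟩ := exists_adj_adj_succ_of_bijOn (G := G) hp.bijOn hin (by lia)
  rcases lt_trichotomy i k with hlt | rfl | hlt
  · exact hreverse hlt hkn hik hik' (.inl rfl)
  · exact G.irrefl hik
  · exact hreverse hlt hin hik.symm hik'.symm (.inr rfl)

end Ore

section Weight

variable {V A : Type*} {G : SimpleGraph V}

/-- The sum of the values of `χ` over the edges traversed by a walk, counted with multiplicity. -/
def walkWeight [AddCommMonoid A] (χ : Sym2 V → A) {u v : V} (p : G.Walk u v) : A :=
  (p.edges.map χ).sum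

/-- All Hamiltonian cycles of `G` have the same `χ`-weight `s`. -/
def HamiltonianCyclesHaveWeight [DecidableEq V] [AddCommMonoid A] (G : SimpleGraph V)
    (χ : Sym2 V → A) (s : A) : Prop :=
  ∀ ⦃a : V⦄ (p : G.Walk a a), p.IsHamiltonianCycle → walkWeight χ p = s

@[simp]
lemma walkWeight_nil [AddCommMonoid A] (χ : Sym2 V → A) (u : V) :
    walkWeight χ (.nil : G.Walk u u) = 0 := rfl

@[simp]
lemma walkWeight_cons [AddCommMonoid A] (χ : Sym2 V → A) {u v w : V} (h : G.Adj u v)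
    (p : G.Walk v w) : walkWeight χ (.cons h p) = χ s(u, v) + walkWeight χ p := by
  simp [walkWeight]

@[simp]
lemma walkWeight_append [AddCommMonoid A] (χ : Sym2 V → A) {u v w : V} (p : G.Walk u v)
    (q : G.Walk v w) : walkWeight χ (p.append q) = walkWeight χ p + walkWeight χ q := by
  simp [walkWeight, SimpleGraph.Walk.edges_append]

lemma exists_walkWeight_eq [AddCommGroup A] {χ : Sym2 V → A} {h : V → A} {t : A}
    (hχ : ∀ ⦃u w⦄, G.Adj u w → χ s(u, w) = h u + h w + t) {a b : V} (p : G.Walk a b) :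
    ∃ z, walkWeight χ p = h a + h b + p.length • t + 2 • z := by
  induction p with
  | @nil u => exact ⟨-h u, by simp; abel⟩
  | @cons u v w huv p ih =>
    obtain ⟨z, hz⟩ := ih
    refine ⟨h v + z, ?_⟩
    rw [walkWeight_cons, hz, hχ huv, SimpleGraph.Walk.length_cons]
    module

end Weight

section MinDegree

open Finset

variable {V : Type*} {G : SimpleGraph V} [DecidableRel G.Adj]

lemma two_mul_card_filter_adj_le {S : Finset V} (hS : #S ≤ 5) {z w : V} (hw : w ∈ S)
    (hzw : ¬ G.Adj z w) : 2 * #{w ∈ S | G.Adj z w} ≤ #S + 3 := by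
  have := Finset.card_lt_card (Finset.filter_ssubset.2 ⟨w, hw, hzw⟩)
  lia

variable [Fintype V]

lemma nonempty_of_card_add_four_le (hδ : Fintype.card V + 4 ≤ 2 * G.minDegree) : Nonempty V := by
  by_contra!
  simp at hδ

lemma exists_adj_adj_notMem (hδ : Fintype.card V + 4 ≤ 2 * G.minDegree) (u v : V)
    {F : Finset V} (hF : #F ≤ 3) : ∃ w ∉ F, G.Adj w u ∧ G.Adj w v := by
  classical
  have hinter : 3 < #(G.neighborFinset u ∩ G.neighborFinset v) := by
    have := Finset.card_inter_add_card_union (G.neighborFinset u) (G.neighborFinset v)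
    have := Finset.card_le_univ (G.neighborFinset u ∪ G.neighborFinset v)
    have := G.minDegree_le_degree u
    have := G.minDegree_le_degree v
    simp only [SimpleGraph.card_neighborFinset_eq_degree] at *
    lia
  obtain ⟨w, hw, hwF⟩ := Finset.exists_mem_notMem_of_card_lt_card (hF.trans_lt hinter)
  simp only [Finset.mem_inter, SimpleGraph.mem_neighborFinset] at hw
  exact ⟨w, hwF, hw.1.symm, hw.2.symm⟩

lemma degree_induce_compl_add_card_filter [DecidableEq V] (S : Finset V)
    (u : {v // v ∈ {v | v ∉ S}}) :
    (G.induce {v | v ∉ S}).degree u + #{w ∈ S | G.Adj u w} = G.degree u := by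
  rw [← SimpleGraph.card_neighborFinset_eq_degree, ← SimpleGraph.card_neighborFinset_eq_degree,
    ← Finset.card_map (.subtype _), SimpleGraph.map_neighborFinset_induce,
    ← Finset.card_union_of_disjoint]
  · congr 1
    ext w
    by_cases hw : w ∈ S <;> simp [hw]
  · rw [Finset.disjoint_left]
    simp +contextual

lemma exists_walk_of_notMem (hδ : Fintype.card V + 4 ≤ 2 * G.minDegree) {S : Finset V}
    (hS : ∀ z ∉ S, 2 * #{w ∈ S | G.Adj z w} ≤ #S + 3) {x y : V} (hxy : x ≠ y)
    (hx : x ∉ S) (hy : y ∉ S) :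
    ∃ p : G.Walk x y, (∀ v ∉ S, v ∈ p.support) ∧ p.length + 1 + #S = Fintype.card V := by
  classical
  have hcard : Fintype.card {v // v ∈ {v | v ∉ S}} + #S = Fintype.card V := by
    rw [Fintype.card_of_subtype Sᶜ (by simp), Finset.card_compl_add_card]
  obtain ⟨p, hp⟩ := exists_isHamiltonian_of_card_lt_degree_add_degree
    (G := G.induce {v | v ∉ S}) (x := ⟨x, hx⟩) (y := ⟨y, hy⟩) (fun u v _ _ ↦ by
      have := degree_induce_compl_add_card_filter (G := G) S u
      have := degree_induce_compl_add_card_filter (G := G) S v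
      have := hS u u.2
      have := hS v v.2
      have := G.minDegree_le_degree u
      have := G.minDegree_le_degree v
      lia) (by simpa using hxy)
  obtain ⟨q, hq⟩ : ∃ q : G.Walk x y, q.support = p.support.map (↑) :=
    ⟨p.map (SimpleGraph.Embedding.induce _).toHom, p.support_map _⟩
  refine ⟨q, fun v hv ↦ hq ▸ List.mem_map_of_mem (hp.mem_support ⟨v, hv⟩), ?_⟩
  rw [← SimpleGraph.Walk.length_support, hq, List.length_map, hp.length_support, hcard]

lemma exists_isHamiltonianCycle [DecidableEq V]
    (hδ : Fintype.card V + 4 ≤ 2 * G.minDegree) :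
    ∃ (a : V) (p : G.Walk a a), p.IsHamiltonianCycle := by
  have : Nonempty V := nonempty_of_card_add_four_le hδ
  have := G.minDegree_lt_card
  obtain ⟨a⟩ := ‹Nonempty V›
  obtain ⟨b, -, hba, -⟩ := exists_adj_adj_notMem hδ a a (F := ∅) (by simp)
  obtain ⟨p, hp, hlen⟩ := exists_walk_of_notMem hδ (S := ∅) (by simp) hba.ne'
    (by simp) (by simp)
  refine ⟨b, .cons hba p, isHamiltonianCycle_of_forall_mem_support (fun v ↦ ?_) ?_ (by lia)⟩
  · exact List.mem_cons_of_mem _ (hp v (Finset.notMem_empty v))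
  · simpa using hlen

end MinDegree

section Apex

variable {V A : Type*} [AddCommGroup A]

/-- The weight of the two edges of the triangle `v x y` at its apex `v`, minus that of the third
edge. -/
def apexWeight (χ : Sym2 V → A) (v x y : V) : A := χ s(v, x) + χ s(v, y) - χ s(x, y)

lemma apexWeight_comm (χ : Sym2 V → A) (v x y : V) :
    apexWeight χ v x y = apexWeight χ v y x := by
  simp [apexWeight, Sym2.eq_swap (a := x), add_comm]

lemma apexWeight_add_apexWeight (χ : Sym2 V → A) (v x y : V) :
    apexWeight χ v x y + apexWeight χ x v y = 2 • χ s(v, x) := by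
  grind [apexWeight, Sym2.eq_swap]

end Apex

section Rigidity

open Finset

variable {V A : Type*} [Fintype V] [DecidableEq V] [AddCommGroup A] {G : SimpleGraph V}
  [DecidableRel G.Adj] {χ : Sym2 V → A} {s : A}

namespace HamiltonianCyclesHaveWeight

lemma walkWeight_eq (hχ : HamiltonianCyclesHaveWeight G χ s)
    (hδ : Fintype.card V + 4 ≤ 2 * G.minDegree) {S : Finset V}
    (hS : ∀ z ∉ S, 2 * #{w ∈ S | G.Adj z w} ≤ #S + 3) {x y : V} (hx : x ∉ S) (hy : y ∉ S)
    (hxy : x ≠ y) {p q : G.Walk x y}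
    (hp : ∀ v ∈ S, v ∈ p.support) (hplen : p.length = #S + 1)
    (hq : ∀ v ∈ S, v ∈ q.support) (hqlen : q.length = #S + 1) :
    walkWeight χ p = walkWeight χ q := by
  obtain ⟨r, hr, hrlen⟩ := exists_walk_of_notMem hδ hS hxy.symm hy hx
  have : Nonempty V := ⟨x⟩
  have := G.minDegree_lt_card
  have key {p : G.Walk x y} (hp : ∀ v ∈ S, v ∈ p.support) (hplen : p.length = #S + 1) :
      walkWeight χ p + walkWeight χ r = s := by
    rw [← walkWeight_append]
    refine hχ _ (isHamiltonianCycle_of_forall_mem_support (fun v ↦ ?_) ?_ ?_)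
    · rw [SimpleGraph.Walk.mem_support_append_iff]
      by_cases hv : v ∈ S
      · exact .inl (hp v hv)
      · exact .inr (hr v hv)
    · rw [SimpleGraph.Walk.length_append]
      lia
    · lia
  exact add_right_cancel ((key hp hplen).trans (key hq hqlen).symm)

lemma add_eq_add_of_four_cycle (hχ : HamiltonianCyclesHaveWeight G χ s)
    (hδ : Fintype.card V + 4 ≤ 2 * G.minDegree) {a b c d : V} (hab : G.Adj a b) (hbc : G.Adj b c)
    (hcd : G.Adj c d) (hda : G.Adj d a) : χ s(a, b) + χ s(c, d) = χ s(a, d) + χ s(b, c) := by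
  obtain rfl | hac := eq_or_ne a c
  · rw [Sym2.eq_swap (a := b), add_comm]
  obtain rfl | hbd := eq_or_ne b d
  · rw [Sym2.eq_swap (a := c)]
  obtain ⟨x, hx, hxb, hxd⟩ := exists_adj_adj_notMem hδ b d (F := {a, c}) (by grind)
  have hcard : #{b, x, d} = 3 := by grind [hxb.ne, hxd.ne]
  have := hχ.walkWeight_eq hδ (S := {b, x, d})
    (p := .cons hab <| .cons hxb.symm <| .cons hxd <| .cons hcd.symm .nil)
    (q := .cons hda.symm <| .cons hxd.symm <| .cons hxb <| .cons hbc .nil)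
    (fun z _ ↦ by have := Finset.card_filter_le {b, x, d} (G.Adj z); lia)
    (by grind [hab.ne, hda.ne]) (by grind [hbc.ne, hcd.ne]) hac
    (by simp) (by simp [hcard]) (by simp) (by simp [hcard])
  simp only [walkWeight_cons, walkWeight_nil] at this
  grind [Sym2.eq_swap]

lemma apexWeight_congr_right (hχ : HamiltonianCyclesHaveWeight G χ s)
    (hδ : Fintype.card V + 4 ≤ 2 * G.minDegree) {v x y z : V} (hvy : G.Adj v y) (hxy : G.Adj x y)
    (hvz : G.Adj v z) (hxz : G.Adj x z) : apexWeight χ v x y = apexWeight χ v x z := by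
  have := hχ.add_eq_add_of_four_cycle hδ hvy hxy.symm hxz hvz.symm
  grind [apexWeight, Sym2.eq_swap]

lemma apexWeight_congr_left (hχ : HamiltonianCyclesHaveWeight G χ s)
    (hδ : Fintype.card V + 4 ≤ 2 * G.minDegree) {v x y z : V} (hvx : G.Adj v x) (hxy : G.Adj x y)
    (hvz : G.Adj v z) (hzy : G.Adj z y) : apexWeight χ v x y = apexWeight χ v z y := by
  rw [apexWeight_comm, hχ.apexWeight_congr_right hδ hvx hxy.symm hvz hzy.symm, apexWeight_comm]

theorem apexWeight_eq_apexWeight (hχ : HamiltonianCyclesHaveWeight G χ s)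
    (hδ : Fintype.card V + 4 ≤ 2 * G.minDegree) {v x x' y y' : V}
    (hvx : G.Adj v x) (hvx' : G.Adj v x') (hxx' : G.Adj x x')
    (hvy : G.Adj v y) (hvy' : G.Adj v y') (hyy' : G.Adj y y') :
    apexWeight χ v x x' = apexWeight χ v y y' := by
  by_cases! hp : ∃ p, G.Adj p v ∧ G.Adj p x' ∧ G.Adj p y
  · obtain ⟨p, hpv, hpx', hpy⟩ := hp
    calc apexWeight χ v x x' = apexWeight χ v p x' :=
          hχ.apexWeight_congr_left hδ hvx hxx' hpv.symm hpx'
      _ = apexWeight χ v p y := hχ.apexWeight_congr_right hδ hvx' hpx' hvy hpy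
      _ = apexWeight χ v y p := apexWeight_comm ..
      _ = apexWeight χ v y y' := hχ.apexWeight_congr_right hδ hpv.symm hpy.symm hvy' hyy'
  obtain rfl | hxy := eq_or_ne x y
  · exact hχ.apexWeight_congr_right hδ hvx' hxx' hvy' hyy'
  obtain rfl | hxy' := eq_or_ne x' y'
  · exact hχ.apexWeight_congr_left hδ hvx hxx' hvy hyy'
  have hx'y : x' ≠ y := fun h ↦ hp x hvx.symm hxx' (h ▸ hxx')
  have hxy'' : x ≠ y' := fun h ↦ hp x hvx.symm hxx' (h ▸ hyy'.symm)
  obtain ⟨r, hr, hrx', hry⟩ := exists_adj_adj_notMem hδ x' y (F := {v, x, y'}) card_le_three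
  have hcard : #{v, x', r, y} = 4 := by grind [hvx'.ne, hvy.ne, hrx'.ne, hry.ne]
  have hS (z : V) (_ : z ∉ ({v, x', r, y} : Finset V)) :
      2 * #{w ∈ {v, x', r, y} | G.Adj z w} ≤ #{v, x', r, y} + 3 := by
    obtain ⟨w, hw, hzw⟩ : ∃ w ∈ ({v, x', y} : Finset V), ¬ G.Adj z w := by
      simpa [not_and_or, imp_iff_not_or] using hp z
    exact two_mul_card_filter_adj_le (by lia) (by grind) hzw
  have := hχ.walkWeight_eq hδ hS
    (p := .cons hvx.symm <| .cons hvx' <| .cons hrx'.symm <| .cons hry <| .cons hyy' .nil)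
    (q := .cons hxx' <| .cons hrx'.symm <| .cons hry <| .cons hvy.symm <| .cons hvy' .nil)
    (by grind [hvx.ne, hxx'.ne]) (by grind [hvy'.ne, hyy'.ne]) hxy''
    (by simp) (by simp [hcard]) (by simp) (by simp [hcard])
  simp only [walkWeight_cons, walkWeight_nil] at this
  grind [apexWeight, Sym2.eq_swap]

lemma five_cycle_eq_of_adj (hχ : HamiltonianCyclesHaveWeight G χ s)
    (hδ : Fintype.card V + 4 ≤ 2 * G.minDegree) {v x u w y p : V} (hvx : G.Adj v x)
    (hxu : G.Adj x u) (huw : G.Adj u w) (hwy : G.Adj w y) (hpv : G.Adj p v) (hpy : G.Adj p y)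
    (hpu : G.Adj p u) :
    χ s(v, x) + χ s(v, y) + χ s(u, w) - χ s(x, u) - χ s(w, y) = apexWeight χ v p y := by
  have hvxup := hχ.add_eq_add_of_four_cycle hδ hvx hxu hpu.symm hpv
  have huwyp := hχ.add_eq_add_of_four_cycle hδ huw hwy hpy.symm hpu
  grind [apexWeight, Sym2.eq_swap]

lemma exists_five_cycle_eq_of_forall_not_adj (hχ : HamiltonianCyclesHaveWeight G χ s)
    (hδ : Fintype.card V + 4 ≤ 2 * G.minDegree) {v x u w y : V} (hvx : G.Adj v x)
    (hxu : G.Adj x u) (huw : G.Adj u w) (hwy : G.Adj w y) (hvy : G.Adj v y) (hxy : x ≠ y)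
    (hvyu : ∀ p, G.Adj p v → G.Adj p y → ¬ G.Adj p u)
    (hvxw : ∀ p, G.Adj p v → G.Adj p x → ¬ G.Adj p w) :
    ∃ r, G.Adj r v ∧ G.Adj r y ∧
      χ s(v, x) + χ s(v, y) + χ s(u, w) - χ s(x, u) - χ s(w, y) = apexWeight χ v r y := by
  have hnadj : ¬ G.Adj v u := fun h ↦ hvxw u h.symm hxu.symm huw
  have hvw : v ≠ w := by
    rintro rfl
    exact hnadj huw.symm
  have hxw : x ≠ w := by
    rintro rfl
    exact hvyu x hvx.symm hwy hxu
  have huy : u ≠ y := by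
    rintro rfl
    exact hnadj hvy
  obtain ⟨r, hr, hrv, hry⟩ := exists_adj_adj_notMem hδ v y (F := {x, w, u}) card_le_three
  have hvu : v ≠ u := by
    rintro rfl
    exact hvyu r hrv hry hrv
  obtain ⟨t, ht, htu, htr⟩ := exists_adj_adj_notMem hδ u r (F := {x, w, y}) card_le_three
  have hcard : #{v, y, r, t, u} = 5 := by grind [hvy.ne, hrv.ne, hry.ne, htr.ne, htu.ne]
  have hS (z : V) (_ : z ∉ ({v, y, r, t, u} : Finset V)) :
      2 * #{w ∈ {v, y, r, t, u} | G.Adj z w} ≤ #{v, y, r, t, u} + 3 := by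
    obtain ⟨w, hw, hzw⟩ : ∃ w ∈ ({v, y, u} : Finset V), ¬ G.Adj z w := by
      simpa [not_and_or, imp_iff_not_or] using hvyu z
    exact two_mul_card_filter_adj_le hcard.le (by grind) hzw
  have := hχ.walkWeight_eq hδ hS
    (p := .cons hvx.symm <| .cons hvy <| .cons hry.symm <| .cons htr.symm <| .cons htu <|
      .cons huw .nil)
    (q := .cons hxu <| .cons htu.symm <| .cons htr <| .cons hrv <| .cons hvy <| .cons hwy.symm .nil)
    (by grind [hvx.ne, hxu.ne]) (by grind [huw.ne, hwy.ne]) hxw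
    (by simp) (by simp [hcard]) (by simp) (by simp [hcard])
  simp only [walkWeight_cons, walkWeight_nil] at this
  exact ⟨r, hrv, hry, by grind [apexWeight, Sym2.eq_swap]⟩

theorem exists_five_cycle_eq_apexWeight (hχ : HamiltonianCyclesHaveWeight G χ s)
    (hδ : Fintype.card V + 4 ≤ 2 * G.minDegree) {v x u w y : V} (hvx : G.Adj v x)
    (hxu : G.Adj x u) (huw : G.Adj u w) (hwy : G.Adj w y) (hvy : G.Adj v y) :
    ∃ a b, G.Adj v a ∧ G.Adj v b ∧ G.Adj a b ∧
      χ s(v, x) + χ s(v, y) + χ s(u, w) - χ s(x, u) - χ s(w, y) = apexWeight χ v a b := by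
  by_cases! hvyu : ∃ p, G.Adj p v ∧ G.Adj p y ∧ G.Adj p u
  · obtain ⟨p, hpv, hpy, hpu⟩ := hvyu
    exact ⟨p, y, hpv.symm, hvy, hpy, hχ.five_cycle_eq_of_adj hδ hvx hxu huw hwy hpv hpy hpu⟩
  by_cases! hvxw : ∃ p, G.Adj p v ∧ G.Adj p x ∧ G.Adj p w
  · obtain ⟨p, hpv, hpx, hpw⟩ := hvxw
    have := hχ.five_cycle_eq_of_adj hδ hvy hwy.symm huw.symm hxu.symm hpv hpx hpw
    exact ⟨p, x, hpv.symm, hvx, hpx, by grind [Sym2.eq_swap]⟩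
  obtain rfl | hxy := eq_or_ne x y
  · obtain ⟨z, -, hzv, hzx⟩ := exists_adj_adj_notMem hδ v x (F := ∅) (by simp)
    have := hχ.apexWeight_eq_apexWeight hδ hvx.symm hzx.symm hzv.symm hxu hwy.symm huw
    have := apexWeight_add_apexWeight χ v x z
    exact ⟨x, z, hvx, hzv.symm, hzx.symm, by grind [apexWeight, Sym2.eq_swap]⟩
  obtain ⟨r, hrv, hry, heq⟩ :=
    hχ.exists_five_cycle_eq_of_forall_not_adj hδ hvx hxu huw hwy hvy hxy hvyu hvxw
  exact ⟨r, y, hrv.symm, hvy, hry, heq⟩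

theorem exists_eq_add_add (hχ : HamiltonianCyclesHaveWeight G χ s)
    (hδ : Fintype.card V + 4 ≤ 2 * G.minDegree) :
    ∃ (h : V → A) (t : A), ∀ ⦃u w⦄, G.Adj u w → χ s(u, w) = h u + h w + t := by
  obtain ⟨v⟩ := nonempty_of_card_add_four_le hδ
  choose x hx using fun u ↦ exists_adj_adj_notMem hδ v u (F := ∅) (by simp)
  obtain ⟨y, -, hyv, hyx⟩ := exists_adj_adj_notMem hδ v (x v) (F := ∅) (by simp)
  -- `h` and `t` come from solving the relation for the closed walk `v, x u, u, w, x w, v` for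
  -- `χ s(u, w)`.
  refine ⟨fun u ↦ χ s(x u, u) - χ s(x u, v), apexWeight χ v (x v) y, fun u w huw ↦ ?_⟩
  obtain ⟨a, b, hva, hvb, hab, heq⟩ := hχ.exists_five_cycle_eq_apexWeight hδ (hx u).2.1.symm
    (hx u).2.2 huw (hx w).2.2.symm (hx w).2.1.symm
  rw [hχ.apexWeight_eq_apexWeight hδ hva hvb hab (hx v).2.1.symm hyv.symm hyx.symm] at heq
  grind [Sym2.eq_swap]

theorem even (hχ : HamiltonianCyclesHaveWeight G χ s)
    (hδ : Fintype.card V + 4 ≤ 2 * G.minDegree) (hV : Even (Fintype.card V)) : Even s := by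
  obtain ⟨h, t, hh⟩ := hχ.exists_eq_add_add hδ
  obtain ⟨a, p, hp⟩ := exists_isHamiltonianCycle hδ
  obtain ⟨z, hz⟩ := exists_walkWeight_eq hh p
  obtain ⟨m, hm⟩ := hV
  refine ⟨h a + m • t + z, ?_⟩
  rw [← hχ p hp, hz, hp.length_eq, hm]
  module

end HamiltonianCyclesHaveWeight

end Rigidity

section TwoColors

lemma even_count_one_iff (l : List (Fin 2)) : Even (l.count 1) ↔ l.sum = 0 := by
  induction l with
  | nil => simp
  | cons a l ih =>
    rw [List.sum_cons]
    obtain rfl | ha := eq_or_ne a 0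
    · simp [ih]
    obtain rfl := Fin.eq_one_of_ne_zero a ha
    rw [List.count_cons_self, Nat.even_add_one, ih]
    generalize l.sum = s
    decide +revert

lemma count_zero_add_count_one (l : List (Fin 2)) : l.count 0 + l.count 1 = l.length := by
  simpa using Multiset.sum_count_eq_card (s := Finset.univ) (m := (l : Multiset (Fin 2))) (by simp)

lemma even_count_of_sum_eq_zero {l : List (Fin 2)} (hlen : Even l.length) (hsum : l.sum = 0)
    (c : Fin 2) : Even (l.count c) := by
  have hone := (even_count_one_iff l).2 hsum
  match c with
  | 0 => exact (Nat.even_add.1 (count_zero_add_count_one l ▸ hlen)).2 hone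
  | 1 => exact hone

variable {V : Type*} [Fintype V] [DecidableEq V] {G : SimpleGraph V} [DecidableRel G.Adj]

theorem exists_isHamiltonianCycle_walkWeight_eq_zero
    (hδ : Fintype.card V + 4 ≤ 2 * G.minDegree) (hV : Even (Fintype.card V))
    (χ : Sym2 V → Fin 2) :
    ∃ (a : V) (p : G.Walk a a), p.IsHamiltonianCycle ∧ walkWeight χ p = 0 := by
  by_contra! hne
  have hone : ¬ Even (1 : Fin 2) := by
    rintro ⟨r, hr⟩
    exact absurd hr (by decide +revert)
  have hχ : HamiltonianCyclesHaveWeight G χ 1 := fun a p hp ↦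
    Fin.eq_one_of_ne_zero _ (hne a p hp)
  exact hone (hχ.even hδ hV)

end TwoColors

theorem odd_ramsey_dirac_plus_two_general {V : Type*} [Fintype V] [DecidableEq V]
    (hV : Even (Fintype.card V)) (G : SimpleGraph V) [DecidableRel G.Adj]
    (hδ : Fintype.card V / 2 + 2 ≤ G.minDegree) (χ : Sym2 V → Fin 2) :
    ∃ (a : V) (w : G.Walk a a), w.IsHamiltonianCycle ∧
      ∀ c : Fin 2, Even ((w.edges.filter (fun e ↦ χ e = c)).length) := by
  obtain ⟨m, hm⟩ := id hV
  obtain ⟨a, p, hp, hzero⟩ :=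
    exists_isHamiltonianCycle_walkWeight_eq_zero (G := G) (by lia) hV χ
  refine ⟨a, p, hp, fun c ↦ ?_⟩
  have hcount := even_count_of_sum_eq_zero (l := p.edges.map χ)
    (by simpa [hp.length_eq] using hV) hzero c
  simpa [List.count, List.countP_map, ← List.countP_eq_length_filter, Function.comp_def,
    beq_eq_decide] using hcount

/-- **Theorem.** Let `n ≥ 4` be even and `G` an `n`-vertex graph with
`δ(G) ≥ n/2 + 2`. Then for every 2-coloring of the edges of `G`, `G` contains
an even-chromatic Hamilton cycle (every color occurs an even number of times),
i.e. `r_odd(n, n/2+2; C_n) ≥ 3`. -/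
theorem odd_ramsey_dirac_plus_two (n : ℕ) (hn : 4 ≤ n) (hne : Even n)
    (G : SimpleGraph (Fin n)) [DecidableRel G.Adj]
    (hδ : n / 2 + 2 ≤ G.minDegree)
    (χ : Sym2 (Fin n) → Fin 2) :
    ∃ (a : Fin n) (w : G.Walk a a), w.IsHamiltonianCycle ∧
      ∀ c : Fin 2, Even ((w.edges.filter (fun e => χ e = c)).length) :=
  odd_ramsey_dirac_plus_two_general (by simpa using hne) G (by simpa using hδ) χ
end

section
/- Let n ≥ 4 be an integer. Then the unique-Ramsey number of Hamilton cycles satisfies r_u(n, C_n) > n/4. Equivalently, for every positive integer r with r ≤ n/4 and every edge-coloring of the complete graph K_n with r colors, there exists a Hamilton cycle of K_n in which no color occurs exactly once. -/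
/-!
Let `S` be a largest set of colors for which some linear forest has exactly two edges of each color
in `S` and no other edge, and let `B` be its nontrivial components and `R` its isolated vertices.
The components in `B` cover at most `4|S|` vertices, so `n ≥ 4r` leaves at least four vertices of
`R` for every missing color, and by maximality no forest can gain two edges of a missing color.

An end `u` of a component that sends three edges of a missing color `c` to `w, w', w'' ∈ R` can be
cut off, giving up one color, and reused as the center of the cherry `w u w'`, which restores the
number of colors. Since `w''` is spare, a cherry can give up either of its ends, so it never needs
such a treatment itself. Hence every end may be assumed to send at most two edges of each missing
color to `R`.

Arrange all components in a cycle with as few edges of missing colors as possible. A color which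
occurs exactly once is missing; rotate its edge to join the last vertex `b` to the first vertex `a`.
Moving a vertex `v ∈ R` between `b` and `a` must create a new edge of a missing color: `av`, `bv`,
or the edge between the two former neighbors of `v`. By maximality of `S`, at most three vertices
`v` belong to the same missing color, whereas `R` has at least four for each.
-/

namespace UniqueRamsey

variable {V C : Type*} (χ : Sym2 V → C)

/-- The colors of the edges of the path visiting the entries of a list in order. -/
def pathColors : List V → Multiset C
  | x :: y :: l => χ s(x, y) ::ₘ pathColors (y :: l)
  | _ => 0

/-- The color of the edge joining the last entry of `x` to the first entry of `y`, as a multiset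
which is empty when one of the two lists is. -/
def linkColors (x y : List V) : Multiset C :=
  (Option.map₂ (fun p q => χ s(p, q)) x.getLast? y.head?).toList

/-- The colors of the edges of the closed walk visiting the entries of a list in cyclic order. -/
def cycleColors (l : List V) : Multiset C := pathColors χ l + linkColors χ l l

section Path

@[simp] lemma pathColors_nil : pathColors χ [] = 0 := rfl

@[simp] lemma pathColors_singleton (v : V) : pathColors χ [v] = 0 := rfl

@[simp] lemma pathColors_cons_cons (x y : V) (l : List V) :
    pathColors χ (x :: y :: l) = χ s(x, y) ::ₘ pathColors χ (y :: l) := rfl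

@[simp] lemma linkColors_nil_left (y : List V) : linkColors χ [] y = 0 := rfl

@[simp] lemma linkColors_nil_right (x : List V) : linkColors χ x [] = 0 := by
  simp [linkColors]

@[simp] lemma linkColors_cons_cons (u v : V) (x y : List V) :
    linkColors χ (u :: v :: x) y = linkColors χ (v :: x) y := by
  simp [linkColors]

@[simp] lemma linkColors_singleton_cons (p q : V) (y : List V) :
    linkColors χ [p] (q :: y) = {χ s(p, q)} := rfl

lemma linkColors_append_left (x : List V) {y : List V} (hy : y ≠ []) (z : List V) :
    linkColors χ (x ++ y) z = linkColors χ y z := by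
  simp [linkColors, List.getLast?_append_of_ne_nil x hy]

lemma linkColors_append_right {x : List V} (hx : x ≠ []) (y z : List V) :
    linkColors χ z (x ++ y) = linkColors χ z x := by
  simp [linkColors, List.head?_append_of_ne_nil x hx]

variable {χ} in
lemma linkColors_eq_singleton {x y : List V} {p q : V} (hx : x.getLast? = some p)
    (hy : y.head? = some q) : linkColors χ x y = {χ s(p, q)} := by
  simp [linkColors, hx, hy]

variable {χ} in
lemma mem_linkColors {x y : List V} {c : C} :
    c ∈ linkColors χ x y ↔ ∃ p q, x.getLast? = some p ∧ y.head? = some q ∧ χ s(p, q) = c := by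
  simp [linkColors, Option.map₂_eq_some_iff]

variable {χ} in
lemma linkColors_eq_singleton_of_mem {x y : List V} {c : C} (hc : c ∈ linkColors χ x y) :
    linkColors χ x y = {c} := by
  obtain ⟨p, q, hx, hy, rfl⟩ := mem_linkColors.1 hc
  exact linkColors_eq_singleton hx hy

lemma pathColors_append (x y : List V) :
    pathColors χ (x ++ y) = pathColors χ x + linkColors χ x y + pathColors χ y := by
  induction x with
  | nil => simp
  | cons p x ih =>
    cases x with
    | nil => cases y <;> simp
    | cons q x => simpa using ih

lemma pathColors_reverse (l : List V) : pathColors χ l.reverse = pathColors χ l := by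
  induction l with
  | nil => rfl
  | cons p l ih =>
    cases l with
    | nil => rfl
    | cons q l =>
      rw [List.reverse_cons, pathColors_append, ih,
        linkColors_eq_singleton (p := q) (q := p) (by simp) rfl, Sym2.eq_swap]
      simp [add_comm]

lemma card_pathColors (l : List V) : (pathColors χ l).card = l.length - 1 := by
  induction l with
  | nil => rfl
  | cons p l ih => cases l <;> simp_all

lemma cycleColors_append_comm (x y : List V) :
    cycleColors χ (x ++ y) = cycleColors χ (y ++ x) := by
  rcases eq_or_ne x [] with rfl | hx
  · simp
  rcases eq_or_ne y [] with rfl | hy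
  · simp
  simp only [cycleColors, pathColors_append, linkColors_append_left, linkColors_append_right,
    ne_eq, hx, hy, not_false_eq_true]
  abel

variable {χ} in
lemma mem_pathColors {l : List V} {c : C} :
    c ∈ pathColors χ l ↔ ∃ x y, l = x ++ y ∧ c ∈ linkColors χ x y := by
  constructor
  · intro h
    induction l with
    | nil => simp at h
    | cons p l ih =>
      cases l with
      | nil => simp at h
      | cons q l =>
        rcases Multiset.mem_cons.1 h with rfl | h
        · exact ⟨[p], q :: l, rfl, by simp⟩
        · obtain ⟨x, y, h1, h2⟩ := ih h
          cases x with
          | nil => simp at h2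
          | cons u x => exact ⟨p :: u :: x, y, by simp [h1], by simpa using h2⟩
  · rintro ⟨x, y, rfl, h⟩
    simp [pathColors_append, h]

end Path

section LinearForest

/-- The vertices of a linear forest. Here and below a linear forest is encoded as the multiset of
its components, each component being the list of its vertices in path order. -/
def verts (F : Multiset (List V)) : Multiset V :=
  F.bind fun p => p

/-- The colors of the edges of a linear forest. -/
def colors (F : Multiset (List V)) : Multiset C :=
  F.bind (pathColors χ)

/-- The linear forest whose components are isolated vertices. -/
def singletons (R : Multiset V) : Multiset (List V) := R.map fun v => [v]

@[simp] lemma verts_zero : verts (0 : Multiset (List V)) = 0 := rfl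

@[simp] lemma verts_cons (p : List V) (F : Multiset (List V)) :
    verts (p ::ₘ F) = p + verts F := by
  simp [verts]

@[simp] lemma verts_singleton (p : List V) : verts {p} = p := by
  simp [verts]

@[simp] lemma verts_add (F G : Multiset (List V)) : verts (F + G) = verts F + verts G := by
  simp [verts]

@[simp] lemma colors_zero : colors χ 0 = 0 := rfl

@[simp] lemma colors_cons (p : List V) (F : Multiset (List V)) :
    colors χ (p ::ₘ F) = pathColors χ p + colors χ F := by
  simp [colors]

@[simp] lemma colors_singleton (p : List V) : colors χ {p} = pathColors χ p := by
  simp [colors]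

@[simp] lemma colors_add (F G : Multiset (List V)) :
    colors χ (F + G) = colors χ F + colors χ G := by
  simp [colors]

@[simp] lemma verts_singletons (R : Multiset V) : verts (singletons R) = R := by
  simpa [verts, singletons, Multiset.bind_map] using Multiset.bind_singleton R id

@[simp] lemma colors_singletons (R : Multiset V) : colors χ (singletons R) = 0 := by
  simp [colors, singletons, Multiset.bind_map]

lemma verts_coe (L : List (List V)) : verts (L : Multiset (List V)) = L.flatten := by
  induction L with
  | nil => rfl
  | cons p L ih => rw [← Multiset.cons_coe, verts_cons, ih]; simp

lemma colors_le_pathColors_flatten (L : List (List V)) :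
    colors χ (L : Multiset (List V)) ≤ pathColors χ L.flatten := by
  induction L with
  | nil => simp
  | cons p L ih =>
    rw [← Multiset.cons_coe, colors_cons, List.flatten_cons, pathColors_append]
    exact add_le_add (Multiset.le_add_right _ _) ih

variable {χ}

lemma exists_colors_eq_of_cons {F : Multiset (List V)} {c : C} {g : Multiset C}
    (h : colors χ F = c ::ₘ g) : ∃ F', verts F' = verts F ∧ colors χ F' = g := by
  have hc : c ∈ colors χ F := h ▸ Multiset.mem_cons_self c g
  obtain ⟨p, hp, hcp⟩ : ∃ p ∈ F, c ∈ pathColors χ p := by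
    simpa [colors] using hc
  obtain ⟨x, y, rfl, hlink⟩ := mem_pathColors.1 hcp
  obtain ⟨F, rfl⟩ := Multiset.exists_cons_of_mem hp
  refine ⟨x ::ₘ y ::ₘ F, by simp [← Multiset.coe_add, add_assoc], (Multiset.cons_inj_right c).1 ?_⟩
  rw [← h, colors_cons, colors_cons, colors_cons, pathColors_append,
    linkColors_eq_singleton_of_mem hlink, ← Multiset.singleton_add]
  abel

lemma exists_colors_eq_of_le {F : Multiset (List V)} {g : Multiset C} (h : g ≤ colors χ F) :
    ∃ F', verts F' = verts F ∧ colors χ F' = g := by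
  obtain ⟨s, hs⟩ := Multiset.le_iff_exists_add.1 h
  induction s using Multiset.induction_on generalizing F with
  | empty => exact ⟨F, rfl, by simpa using hs⟩
  | cons c s ih =>
    obtain ⟨F₁, hv, hc⟩ := exists_colors_eq_of_cons (hs.trans (Multiset.add_cons c g s))
    obtain ⟨F₂, hv', hc'⟩ := ih (hc ▸ Multiset.le_add_right g s) hc
    exact ⟨F₂, hv'.trans hv, hc'⟩

lemma exists_nontrivial_components (F : Multiset (List V)) :
    ∃ B R, verts B + R = verts F ∧ colors χ B = colors χ F ∧ ∀ p ∈ B, 2 ≤ p.length := by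
  induction F using Multiset.induction_on with
  | empty => exact ⟨0, 0, by simp⟩
  | cons p F ih =>
    obtain ⟨B, R, hv, hc, hB⟩ := ih
    rcases le_or_gt 2 p.length with hp | hp
    · refine ⟨p ::ₘ B, R, by simp [← hv, add_assoc], by simp [hc], fun q hq => ?_⟩
      rcases Multiset.mem_cons.1 hq with rfl | hq
      exacts [hp, hB q hq]
    · refine ⟨B, p + R, by rw [verts_cons, ← hv]; abel, ?_, hB⟩
      have : pathColors χ p = 0 := by
        rw [← Multiset.card_eq_zero, card_pathColors]; omega
      simp [this, hc]

lemma exists_components_of_le_colors {F : Multiset (List V)} {g : Multiset C}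
    (h : g ≤ colors χ F) :
    ∃ B R, verts B + R = verts F ∧ colors χ B = g ∧ ∀ p ∈ B, 2 ≤ p.length := by
  obtain ⟨F', hv, hc⟩ := exists_colors_eq_of_le h
  obtain ⟨B, R, hBR, hB⟩ := exists_nontrivial_components (χ := χ) F'
  exact ⟨B, R, hBR.trans hv, hB.1.trans hc, hB.2⟩

lemma card_verts_le {B : Multiset (List V)} (hB : ∀ p ∈ B, 2 ≤ p.length) :
    (verts B).card ≤ 2 * (colors χ B).card := by
  induction B using Multiset.induction_on with
  | empty => simp
  | cons p B ih =>
    have hp := hB p (Multiset.mem_cons_self p B)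
    have := ih fun q hq => hB q (Multiset.mem_cons_of_mem hq)
    simp only [verts_cons, colors_cons, Multiset.card_add, Multiset.coe_card, card_pathColors]
    omega

end LinearForest

section Extremal

/-- A set `S` of colors is doublable on `U` if some linear forest with vertices `U` has exactly two
edges of every color in `S` and no other edge. -/
def Doublable (U : Multiset V) (S : Finset C) : Prop :=
  ∃ F, verts F = U ∧ colors χ F = 2 • S.val

/-- A color `c` is saturated in a linear forest if no linear forest on the same vertices contains
the same colors together with two further edges of color `c`. -/
def IsSaturated (F : Multiset (List V)) (c : C) : Prop :=
  ∀ F', verts F' = verts F → ¬ c ::ₘ c ::ₘ colors χ F ≤ colors χ F'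

variable {χ}

lemma two_nsmul_cons_val (S : Finset C) {c : C} (hc : c ∉ S) :
    2 • (S.cons c hc).val = c ::ₘ c ::ₘ 2 • S.val := by
  simp [two_nsmul]

lemma isSaturated_of_maximalFor {U : Multiset V} {S : Finset C}
    (hS : MaximalFor (Doublable χ U) Finset.card S) {F : Multiset (List V)} (hv : verts F = U)
    (hF : colors χ F = 2 • S.val) {c : C} (hc : c ∉ S) : IsSaturated χ F c := by
  intro F' hv' hle
  obtain ⟨F'', hv'', hF''⟩ := exists_colors_eq_of_le hle
  have hdbl : Doublable χ U (S.cons c hc) :=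
    ⟨F'', hv''.trans (hv'.trans hv), by rw [hF'', hF, two_nsmul_cons_val]⟩
  have := hS.2 hdbl (by simp)
  simp at this

/-- `t` is the first or the last vertex of the path `p`. -/
def IsEnd (p : List V) (t : V) : Prop := p.head? = some t ∨ p.getLast? = some t

lemma IsEnd.exists_cons_cons {p : List V} {u : V} (hu : IsEnd p u) (hp : 2 ≤ p.length) :
    ∃ y l, (u :: y :: l : Multiset V) = p ∧ pathColors χ (u :: y :: l) = pathColors χ p := by
  wlog h : p.head? = some u generalizing p
  · have hlast := hu.resolve_left h
    obtain ⟨y, l, hv, hc⟩ := this (p := p.reverse) (.inl (by simpa)) (by simpa) (by simpa)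
    exact ⟨y, l, by simpa using hv, by rw [hc, pathColors_reverse]⟩
  match p, hp with
  | x :: y :: l, _ =>
    obtain rfl : x = u := by simpa using h
    exact ⟨y, l, rfl, rfl⟩

/-- Every end of a component of `D` can be exchanged for a vertex of `R`: there is a linear forest
with the same colors as `D` that uses some vertex of `R` instead of this end. -/
def IsFlexible (χ : Sym2 V → C) (D : Multiset (List V)) (R : Multiset V) : Prop :=
  ∀ p ∈ D, ∀ t, IsEnd p t →
    ∃ D', ∃ z ∈ R, t ::ₘ verts D' = z ::ₘ verts D ∧ colors χ D' = colors χ D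

variable (χ) in
/-- A splitting of a linear forest with vertices `U` into a doubled forest `Q` with color set `S`, a
flexible doubled forest `D` with color set `T`, and isolated vertices `R`. -/
structure IsFlexDecomposition (U : Multiset V) (Q D : Multiset (List V)) (R : Multiset V)
    (S T : Finset C) : Prop where
  verts_eq : verts Q + verts D + R = U
  two_le_length : ∀ p ∈ Q + D, 2 ≤ p.length
  colors_left : colors χ Q = 2 • S.val
  colors_right : colors χ D = 2 • T.val
  disjoint : Disjoint S T
  isFlexible : IsFlexible χ D R

variable (χ) in
/-- A doubled linear forest `B` with color set `S` which, completed by the isolated vertices `R`,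
saturates all other colors, and whose path ends send few edges of any such color to `R`. -/
structure IsExtremal [DecidableEq C] (B : Multiset (List V)) (R : Multiset V) (S : Finset C) :
    Prop where
  two_le_length : ∀ p ∈ B, 2 ≤ p.length
  colors_eq : colors χ B = 2 • S.val
  isSaturated : ∀ c ∉ S, IsSaturated χ (B + singletons R) c
  countP_le : ∀ p ∈ B, ∀ u, IsEnd p u → ∀ c ∉ S, R.countP (fun v => χ s(u, v) = c) ≤ 2

lemma IsFlexible.mono {D : Multiset (List V)} {R R' : Multiset V} (h : IsFlexible χ D R)
    (hR : R ≤ R') : IsFlexible χ D R' := fun p hp t ht => by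
  obtain ⟨D', z, hz, hD'⟩ := h p hp t ht
  exact ⟨D', z, Multiset.mem_of_le hR hz, hD'⟩

lemma pathColors_cherry {u x y : V} {c : C} (hx : χ s(u, x) = c) (hy : χ s(u, y) = c) :
    pathColors χ [x, u, y] = {c, c} := by
  simp [Sym2.eq_swap (a := x), hx, hy]

/-- With three edges of color `c` from `u` to isolated vertices, the cherry may use any two of
them, so that one of the three vertices is always spare. -/
lemma IsFlexible.cons_cherry {D : Multiset (List V)} {R : Multiset V} {u w w' w'' : V} {c : C}
    (hD : IsFlexible χ D (w ::ₘ w' ::ₘ w'' ::ₘ R)) (hw : χ s(u, w) = c) (hw' : χ s(u, w') = c)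
    (hw'' : χ s(u, w'') = c) : IsFlexible χ ([w, u, w'] ::ₘ D) (w'' ::ₘ R) := by
  intro p hp t ht
  have exchange {D' : Multiset (List V)} (x y : V) {z : V} (hx : χ s(u, x) = c)
      (hy : χ s(u, y) = c) (hz : z ∈ w'' ::ₘ R) (hc : colors χ D' = colors χ D)
      (hv : t ::ₘ x ::ₘ y ::ₘ verts D' = z ::ₘ w ::ₘ w' ::ₘ verts D) :
      ∃ D', ∃ z ∈ w'' ::ₘ R, t ::ₘ verts D' = z ::ₘ verts ([w, u, w'] ::ₘ D) ∧
        colors χ D' = colors χ ([w, u, w'] ::ₘ D) := by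
    refine ⟨[x, u, y] ::ₘ D', z, hz, ?_, ?_⟩
    · simpa [← Multiset.cons_coe, Multiset.cons_swap _ u] using hv
    · rw [colors_cons, colors_cons, pathColors_cherry hx hy,
        pathColors_cherry hw hw', hc]
  rcases Multiset.mem_cons.1 hp with rfl | hp
  · obtain rfl | rfl : t = w ∨ t = w' := by simpa [IsEnd, eq_comm] using ht
    · refine exchange w' w'' hw' hw'' (Multiset.mem_cons_self _ _) rfl ?_
      rw [Multiset.cons_swap w' w'', Multiset.cons_swap t w'']
    · refine exchange w w'' hw hw'' (Multiset.mem_cons_self _ _) rfl ?_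
      rw [Multiset.cons_swap t w, Multiset.cons_swap t w'', Multiset.cons_swap w w'']
  · obtain ⟨D', z, hz, hv, hc⟩ := hD p hp t ht
    obtain rfl | rfl | hz : z = w ∨ z = w' ∨ z ∈ w'' ::ₘ R := by simpa using hz
    · refine exchange w' w'' hw' hw'' (Multiset.mem_cons_self _ _) hc ?_
      rw [Multiset.cons_swap t w', Multiset.cons_swap t w'', hv, Multiset.cons_swap w' w'',
        Multiset.cons_swap w' z]
    · refine exchange w w'' hw hw'' (Multiset.mem_cons_self _ _) hc ?_
      rw [Multiset.cons_swap t w, Multiset.cons_swap t w'', hv, Multiset.cons_swap w w'']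
    · refine exchange w w' hw hw' hz hc ?_
      rw [Multiset.cons_swap t w, Multiset.cons_swap t w', hv, Multiset.cons_swap w' z,
        Multiset.cons_swap w z]

lemma exists_eq_cons_of_lt_countP {α : Type*} {P : α → Prop} [DecidablePred P] {s : Multiset α}
    {k : ℕ} (h : k < s.countP P) : ∃ a t, s = a ::ₘ t ∧ P a ∧ k ≤ t.countP P := by
  obtain ⟨a, ha, hPa⟩ := Multiset.countP_pos.1 (Nat.zero_lt_of_lt h)
  obtain ⟨t, rfl⟩ := Multiset.exists_cons_of_mem ha
  rw [Multiset.countP_cons_of_pos _ hPa] at h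
  exact ⟨a, t, rfl, hPa, Nat.le_of_lt_succ h⟩

/-- Deleting an end of a component destroys one edge; trimming away the other edge of its color
keeps the forest doubled. -/
lemma exists_doubled_of_isEnd {Q : Multiset (List V)} {S : Finset C}
    (hQ : colors χ Q = 2 • S.val) {p : List V} (hp : p ∈ Q) (hlen : 2 ≤ p.length) {u : V}
    (hu : IsEnd p u) :
    ∃ Q' R', ∃ S' ⊆ S, S'.card + 1 = S.card ∧ u ::ₘ (verts Q' + R') = verts Q ∧
      colors χ Q' = 2 • S'.val ∧ ∀ q ∈ Q', 2 ≤ q.length := by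
  classical
  obtain ⟨y, l, hpv, hpc⟩ := hu.exists_cons_cons (χ := χ) hlen
  obtain ⟨Q, rfl⟩ := Multiset.exists_cons_of_mem hp
  have hcol : 2 • S.val = χ s(u, y) ::ₘ colors χ ((y :: l) ::ₘ Q) := by
    rw [← hQ, colors_cons, colors_cons, ← hpc, pathColors_cons_cons, Multiset.cons_add]
  have hmem : χ s(u, y) ∈ S := by
    rw [← Finset.mem_val, ← Multiset.mem_nsmul_of_ne_zero two_ne_zero, hcol]
    exact Multiset.mem_cons_self _ _
  have hS := S.insert_erase hmem
  rw [← Finset.cons_eq_insert _ _ (S.notMem_erase _)] at hS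
  rw [← hS, two_nsmul_cons_val, Multiset.cons_inj_right] at hcol
  obtain ⟨Q', R', hv, hc, hlen'⟩ :=
    exists_components_of_le_colors (hcol.le.trans' (Multiset.le_cons_self _ _))
  refine ⟨Q', R', S.erase (χ s(u, y)), S.erase_subset _, S.card_erase_add_one hmem, ?_, hc, hlen'⟩
  rw [hv, verts_cons, verts_cons, ← hpv, ← Multiset.cons_add, Multiset.cons_coe]

lemma IsFlexDecomposition.exists_exchange [DecidableEq C] {U R : Multiset V}
    {Q D : Multiset (List V)} {S T : Finset C} (h : IsFlexDecomposition χ U Q D R S T)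
    {p : List V} (hp : p ∈ Q) {u : V} (hu : IsEnd p u) {c : C} (hcS : c ∉ S) (hcT : c ∉ T)
    (hc : 3 ≤ R.countP fun v => χ s(u, v) = c) :
    ∃ Q' D' R' S' T', IsFlexDecomposition χ U Q' D' R' S' T' ∧ S'.card < S.card ∧
      S'.card + T'.card = S.card + T.card := by
  obtain ⟨w, R, rfl, hw, hc⟩ := exists_eq_cons_of_lt_countP hc
  obtain ⟨w', R, rfl, hw', hc⟩ := exists_eq_cons_of_lt_countP hc
  obtain ⟨w'', R, rfl, hw'', -⟩ := exists_eq_cons_of_lt_countP hc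
  obtain ⟨Q', R', S', hSS, hcard, hv, hc', hlen⟩ := exists_doubled_of_isEnd h.colors_left hp
    (h.two_le_length p (Multiset.mem_add.2 (.inl hp))) hu
  refine ⟨Q', [w, u, w'] ::ₘ D, w'' ::ₘ (R + R'), S', T.cons c hcT,
    ⟨?_, ?_, hc', ?_, ?_, ?_⟩, by omega, by rw [Finset.card_cons]; omega⟩
  · rw [← h.verts_eq, ← hv, verts_cons]
    simp only [← Multiset.cons_coe, Multiset.coe_nil, ← Multiset.singleton_add]
    abel
  · intro q hq
    obtain rfl | hq | hq : q = [w, u, w'] ∨ q ∈ Q' ∨ q ∈ D := by simpa using hq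
    exacts [by simp, hlen q hq, h.two_le_length q (Multiset.mem_add.2 (.inr hq))]
  · rw [colors_cons, h.colors_right, two_nsmul_cons_val, pathColors_cherry hw hw']
    simp
  · rw [Finset.cons_eq_insert, Finset.disjoint_insert_right]
    exact ⟨fun h' => hcS (hSS h'), h.disjoint.mono_left hSS⟩
  · exact IsFlexible.cons_cherry (h.isFlexible.mono (by simp)) hw hw' hw''

lemma IsSaturated.countP_le_of_isFlexible [DecidableEq C] {Q D : Multiset (List V)}
    {R : Multiset V} {c : C} (hc : IsSaturated χ (Q + D + singletons R) c)
    (hD : IsFlexible χ D R) {p : List V} (hp : p ∈ D) {u : V} (hu : IsEnd p u) :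
    R.countP (fun v => χ s(u, v) = c) ≤ 2 := by
  by_contra! h
  obtain ⟨D', z, hz, hv, hcol⟩ := hD p hp u hu
  obtain ⟨R, rfl⟩ := Multiset.exists_cons_of_mem hz
  have h' : 2 ≤ R.countP fun v => χ s(u, v) = c := by
    rw [Multiset.countP_cons] at h
    split_ifs at h <;> omega
  obtain ⟨w, R, rfl, hw, h'⟩ := exists_eq_cons_of_lt_countP h'
  obtain ⟨w', R, rfl, hw', -⟩ := exists_eq_cons_of_lt_countP h'
  refine hc ([w, u, w'] ::ₘ (Q + D' + singletons R)) ?_ ?_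
  · have hverts : verts ([w, u, w'] ::ₘ (Q + D' + singletons R)) =
        {w} + {w'} + verts Q + (u ::ₘ verts D') + R := by
      simp only [verts_cons, verts_add, verts_singletons, ← Multiset.cons_coe, Multiset.coe_nil]
      simp only [← Multiset.singleton_add]
      abel
    rw [hverts, hv]
    simp only [verts_add, verts_singletons, ← Multiset.singleton_add]
    abel
  · simp [pathColors_cherry hw hw', hcol]

lemma exists_isFlexDecomposition {U : Multiset V} {S : Finset C} (hS : Doublable χ U S) :
    ∃ Q R, IsFlexDecomposition χ U Q 0 R S ∅ := by
  obtain ⟨F, rfl, hF⟩ := hS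
  obtain ⟨Q, R, hv, hQ, hlen⟩ := exists_components_of_le_colors hF.ge
  exact ⟨Q, R, by simpa, by simpa, hQ, rfl, by simp, by simp [IsFlexible]⟩

lemma IsFlexDecomposition.exists_isExtremal [DecidableEq C] {U R : Multiset V}
    {Q D : Multiset (List V)} {S T S₀ : Finset C} (h : IsFlexDecomposition χ U Q D R S T)
    (hS₀ : MaximalFor (Doublable χ U) Finset.card S₀) (hcard : S.card + T.card = S₀.card) :
    ∃ B R S, verts B + R = U ∧ IsExtremal χ B R S := by
  induction hn : S.card using Nat.strong_induction_on generalizing Q D R S T with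
  | _ n ih =>
  by_cases hex : ∃ p ∈ Q, ∃ u, IsEnd p u ∧ ∃ c, c ∉ S ∧ c ∉ T ∧
      3 ≤ R.countP fun v => χ s(u, v) = c
  · obtain ⟨p, hp, u, hu, c, hcS, hcT, hc⟩ := hex
    obtain ⟨Q', D', R', S', T', h', hlt, hcard'⟩ := h.exists_exchange hp hu hcS hcT hc
    exact ih _ (hn ▸ hlt) h' (hcard'.trans hcard) rfl
  · have hcol : colors χ (Q + D) = 2 • (S.disjUnion T h.disjoint).val := by
      rw [colors_add, h.colors_left, h.colors_right, ← nsmul_add]; rfl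
    have hv : verts (Q + D + singletons R) = U := by simpa using h.verts_eq
    have hmax : MaximalFor (Doublable χ U) Finset.card (S.disjUnion T h.disjoint) := by
      refine ⟨⟨Q + D + singletons R, hv, by simpa using hcol⟩, fun S' hS' _ => ?_⟩
      rw [Finset.card_disjUnion, hcard]
      exact hS₀.le hS'
    have hsat : ∀ c ∉ S.disjUnion T h.disjoint, IsSaturated χ (Q + D + singletons R) c :=
      fun c hc => isSaturated_of_maximalFor hmax hv (by simpa using hcol) hc
    refine ⟨Q + D, R, S.disjUnion T h.disjoint, by simpa using h.verts_eq, h.two_le_length,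
      hcol, hsat, fun p hp u hu c hc => ?_⟩
    rcases Multiset.mem_add.1 hp with hp | hp
    · by_contra! hlt
      rw [Finset.mem_disjUnion, not_or] at hc
      exact hex ⟨p, hp, u, hu, c, hc.1, hc.2, hlt⟩
    · exact (hsat c hc).countP_le_of_isFlexible h.isFlexible hp hu

lemma exists_isExtremal [DecidableEq C] [Finite C] (χ : Sym2 V → C) (U : Multiset V) :
    ∃ B R S, verts B + R = U ∧ IsExtremal χ B R S := by
  obtain ⟨S, hS⟩ : ∃ S, MaximalFor (Doublable χ U) Finset.card S :=
    Set.Finite.exists_maximalFor _ _ (Set.toFinite _) ⟨∅, singletons U, by simp⟩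
  obtain ⟨Q, R, h⟩ := exists_isFlexDecomposition hS.prop
  exact h.exists_isExtremal hS (by simp)

end Extremal

variable {χ}

section Arrangement

lemma IsSaturated.countP_le_one [DecidableEq C] {B : Multiset (List V)} {R : Multiset V} {u : V}
    {c : C} (hc : IsSaturated χ (B + singletons (u ::ₘ R)) c) :
    R.countP (fun v => χ s(u, v) = c) ≤ 1 := by
  by_contra! h
  obtain ⟨w, R, rfl, hw, h⟩ := exists_eq_cons_of_lt_countP h
  obtain ⟨w', R, rfl, hw', -⟩ := exists_eq_cons_of_lt_countP h
  refine hc ([w, u, w'] ::ₘ (B + singletons R)) ?_ (by simp [pathColors_cherry hw hw'])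
  simp only [verts_cons, verts_add, verts_singletons, ← Multiset.cons_coe, Multiset.coe_nil]
  simp only [← Multiset.singleton_add]
  abel

lemma IsSaturated.not_le_pathColors {F : Multiset (List V)} {c : C} (hc : IsSaturated χ F c)
    {l : List V} (hl : l = verts F) : ¬ c ::ₘ c ::ₘ colors χ F ≤ pathColors χ l := by
  simpa using hc {l} (by simpa using hl)

lemma head?_flatten_of_append_cons {X Y : List (List V)} {v a : V} (hva : v ≠ a)
    (h : (X ++ [v] :: Y).flatten.head? = some a) : X.flatten.head? = some a := by
  cases hX : X.flatten <;> simp_all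

lemma getLast?_flatten_of_append_cons {X Y : List (List V)} {v b : V} (hvb : v ≠ b)
    (h : (X ++ [v] :: Y).flatten.getLast? = some b) : Y.flatten.getLast? = some b := by
  rcases Y.flatten.eq_nil_or_concat with hY | ⟨l, z, hY⟩ <;> simp_all [List.getLast?_cons]

lemma exists_perm_cons_singleton {L : List (List V)} {v : V} (hv : [v] ∈ L) :
    ∃ L', L.Perm ([v] :: L') ∧
      (∀ a, v ≠ a → L.flatten.head? = some a → L'.flatten.head? = some a) ∧
      ∀ b, v ≠ b → L.flatten.getLast? = some b → L'.flatten.getLast? = some b := by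
  obtain ⟨X, Y, rfl⟩ := List.append_of_mem hv
  refine ⟨X ++ Y, List.perm_middle, fun a hva h => ?_, fun b hvb h => ?_⟩
  · simp [head?_flatten_of_append_cons hva h]
  · simp [getLast?_flatten_of_append_cons hvb h]

lemma IsSaturated.pathColors_ne {L L' : List (List V)} {c : C}
    (hc : IsSaturated χ (L : Multiset (List V)) c) {v w : V} (hL : L.Perm ([v] :: [w] :: L'))
    {l : List V} (hl : l.Perm (v :: w :: L'.flatten)) :
    pathColors χ l ≠ {c} + {c} + pathColors χ L'.flatten := fun heq => by
  rw [Multiset.coe_eq_coe.2 hL] at hc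
  refine hc.not_le_pathColors (l := l) (by rw [verts_coe]; exact Multiset.coe_eq_coe.2 hl) ?_
  have hle := colors_le_pathColors_flatten χ L'
  simp only [← Multiset.cons_coe, colors_cons, pathColors_singleton, zero_add]
  simpa [heq, ← Multiset.singleton_add, add_assoc] using hle

lemma IsSaturated.eq_of_crossing {L : List (List V)} {c : C}
    (hc : IsSaturated χ (L : Multiset (List V)) c) {a b v w : V}
    (ha : L.flatten.head? = some a) (hb : L.flatten.getLast? = some b) (hv : [v] ∈ L)
    (hw : [w] ∈ L) (hva : v ≠ a) (hwb : w ≠ b) (hav : χ s(a, v) = c) (hbw : χ s(b, w) = c)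
    (hvw : v ≠ w) : v = b ∧ w = a := by
  obtain ⟨L₁, hL₁, ha₁, hb₁⟩ := exists_perm_cons_singleton hv
  have hw₁ : [w] ∈ L₁ := by simpa [hvw.symm] using hL₁.mem_iff.1 hw
  obtain ⟨L₂, hL₂, ha₂, hb₂⟩ := exists_perm_cons_singleton hw₁
  have no_path (l : List V) := hc.pathColors_ne (l := l) (hL₁.trans (hL₂.cons [v]))
  by_contra h
  rcases eq_or_ne w a with rfl | hwa
  · have hvb : v ≠ b := fun hvb => h ⟨hvb, rfl⟩
    have hlink : linkColors χ L₂.flatten [w, v] = {c} :=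
      hbw ▸ linkColors_eq_singleton (hb₂ b hwb (hb₁ b hvb hb)) rfl
    refine no_path (L₂.flatten ++ [w, v])
      (List.perm_append_comm.trans (List.Perm.swap v w L₂.flatten)) ?_
    rw [pathColors_append, hlink, pathColors_cons_cons, hav, ← Multiset.singleton_add,
      pathColors_singleton]
    abel
  have ha₂ := ha₂ a hwa (ha₁ a hva ha)
  rcases eq_or_ne v b with rfl | hvb
  · have hlink : linkColors χ [w, v] L₂.flatten = {c} :=
      hav ▸ Sym2.eq_swap ▸ linkColors_eq_singleton rfl ha₂
    refine no_path ([w, v] ++ L₂.flatten) (List.Perm.swap v w L₂.flatten) ?_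
    rw [pathColors_append, hlink, pathColors_cons_cons, Sym2.eq_swap, hbw,
      ← Multiset.singleton_add, pathColors_singleton]
    abel
  · have hlink : linkColors χ [v] L₂.flatten = {c} :=
      hav ▸ Sym2.eq_swap ▸ linkColors_eq_singleton rfl ha₂
    have hlink' : linkColors χ ([v] ++ L₂.flatten) [w] = {c} :=
      hbw ▸ linkColors_eq_singleton (by simp [List.getLast?_cons, hb₂ b hwb (hb₁ b hvb hb)]) rfl
    refine no_path ([v] ++ L₂.flatten ++ [w]) ((List.perm_append_singleton w _).cons v) ?_
    rw [pathColors_append, pathColors_append, hlink, hlink', pathColors_singleton,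
      pathColors_singleton]
    abel

lemma cons_cons_colors_le (X M Y : List (List V)) (v w : V) (c : C) :
    c ::ₘ c ::ₘ colors χ ((X ++ [v] :: (M ++ [w] :: Y) : List (List V)) : Multiset (List V)) ≤
      {c} + {c} + (pathColors χ X.flatten + pathColors χ M.flatten + pathColors χ Y.flatten) := by
  rw [← Multiset.singleton_add, ← Multiset.singleton_add, ← add_assoc]
  simp only [← Multiset.coe_add, ← Multiset.cons_coe, colors_cons, colors_add,
    pathColors_singleton, zero_add, ← add_assoc (colors χ X)]
  gcongr <;> exact colors_le_pathColors_flatten χ _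

lemma IsSaturated.not_le_colors {X M Y : List (List V)} {v w : V} {c : C}
    (hc : IsSaturated χ ((X ++ [v] :: (M ++ [w] :: Y) : List (List V)) : Multiset (List V)) c)
    {F : Multiset (List V)}
    (hF : verts F = {v} + {w} + (X.flatten + M.flatten + Y.flatten : Multiset V)) :
    ¬ {c} + {c} + (pathColors χ X.flatten + pathColors χ M.flatten + pathColors χ Y.flatten) ≤
      colors χ F := fun hle => by
  refine hc F ?_ ((cons_cons_colors_le X M Y v w c).trans hle)
  rw [hF, verts_coe]
  simp only [List.flatten_append, List.flatten_cons, ← Multiset.coe_add, Multiset.coe_singleton]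
  abel

lemma IsSaturated.notMem_linkColors {X M Y : List (List V)} {v w : V} {c : C}
    (hc : IsSaturated χ ((X ++ [v] :: (M ++ [w] :: Y) : List (List V)) : Multiset (List V)) c)
    (hv : c ∈ linkColors χ X.flatten (M ++ [w] :: Y).flatten) :
    c ∉ linkColors χ (X ++ [v] :: M).flatten Y.flatten := fun hw => by
  rcases eq_or_ne M.flatten [] with hM | hM
  · -- `w` and `v` can change places, joining `X` to `w` and `v` to `Y`.
    rw [List.flatten_append, hM, List.nil_append, List.flatten_cons,
      linkColors_append_right _ (by simp)] at hv
    rw [List.flatten_append, List.flatten_cons, hM, List.append_nil,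
      linkColors_append_left _ _ (by simp)] at hw
    refine hc.not_le_colors (F := {X.flatten ++ [w] ++ ([v] ++ Y.flatten)}) ?_ ?_
    · rw [verts_singleton, hM]
      simp only [← Multiset.coe_add, Multiset.coe_nil, Multiset.coe_singleton]
      abel
    · rw [colors_singleton, pathColors_append, pathColors_append, pathColors_append,
        linkColors_eq_singleton_of_mem hv, linkColors_eq_singleton_of_mem hw, hM, pathColors_nil,
        pathColors_singleton, pathColors_singleton]
      refine (Multiset.le_add_right _
        (linkColors χ (X.flatten ++ [w]) ([v] ++ Y.flatten))).trans_eq ?_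
      abel
  · -- `X`, `M`, `Y` form a single path once `v` and `w` are left out.
    rw [List.flatten_append, linkColors_append_right _ hM] at hv
    rw [List.flatten_append, List.flatten_cons, ← List.append_assoc,
      linkColors_append_left _ _ hM] at hw
    refine hc.not_le_colors (F := [v] ::ₘ [w] ::ₘ {X.flatten ++ M.flatten ++ Y.flatten}) ?_ ?_
    · simp only [verts_cons, verts_singleton, ← Multiset.coe_add, Multiset.coe_singleton,
        add_assoc]
    · refine le_of_eq ?_
      rw [colors_cons, colors_cons, colors_singleton, pathColors_append, pathColors_append,
        linkColors_eq_singleton_of_mem hv, linkColors_append_left _ _ hM,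
        linkColors_eq_singleton_of_mem hw, pathColors_singleton, pathColors_singleton]
      abel

end Arrangement

section Charging

lemma exists_isEnd_of_flatten {L : List (List V)} {u : V} (hu : IsEnd L.flatten u) :
    ∃ p ∈ L, IsEnd p u := by
  rcases hu with h | h
  · rw [List.head?_flatten] at h
    obtain ⟨p, hp, hu⟩ := List.exists_of_findSome?_eq_some h
    exact ⟨p, hp, .inl hu⟩
  · rw [List.getLast?_flatten] at h
    obtain ⟨p, hp, hu⟩ := List.exists_of_findSome?_eq_some h
    exact ⟨p, List.mem_reverse.1 hp, .inr hu⟩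

lemma IsExtremal.card_filter_le [DecidableEq V] [DecidableEq C] {B : Multiset (List V)}
    {R : Finset V} {S : Finset C} (h : IsExtremal χ B R.val S) {p : List V}
    (hp : p ∈ B + singletons R.val) {u : V} (hu : IsEnd p u) {c : C} (hc : c ∉ S) :
    (R.filter fun v => v ≠ u ∧ χ s(u, v) = c).card ≤ 2 := by
  have card_filter (T : Finset V) :
      (T.filter fun v => χ s(u, v) = c).card = T.val.countP fun v => χ s(u, v) = c := by
    rw [Finset.card_def, Finset.filter_val, Multiset.countP_eq_card_filter]
  rcases Multiset.mem_add.1 hp with hp | hp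
  · calc (R.filter fun v => v ≠ u ∧ χ s(u, v) = c).card
        ≤ (R.filter fun v => χ s(u, v) = c).card :=
          Finset.card_le_card (Finset.monotone_filter_right R fun _ _ hv => hv.2)
      _ ≤ 2 := (card_filter R).trans_le (h.countP_le p hp u hu c hc)
  · obtain ⟨t, ht, rfl⟩ := Multiset.mem_map.1 hp
    obtain rfl : t = u := by simpa [IsEnd] using hu
    have hsat := h.isSaturated c hc
    rw [← Finset.insert_erase ht, Finset.insert_val_of_notMem (R.notMem_erase t)] at hsat
    calc (R.filter fun v => v ≠ t ∧ χ s(t, v) = c).card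
        ≤ ((R.erase t).filter fun v => χ s(t, v) = c).card :=
          Finset.card_le_card fun v hv => by simp_all
      _ ≤ 2 := (card_filter _).trans_le (hsat.countP_le_one.trans one_le_two)

lemma card_union_le_two_of_cross [DecidableEq V] {A B : Finset V} {a b : V} (hA : A.card ≤ 2)
    (hB : B.card ≤ 2) (h : ∀ v ∈ A, ∀ w ∈ B, v ≠ w → v = b ∧ w = a) : (A ∪ B).card ≤ 2 := by
  by_cases hAB : A ⊆ B
  · rwa [Finset.union_eq_right.2 hAB]
  by_cases hBA : B ⊆ A
  · rwa [Finset.union_eq_left.2 hBA]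
  obtain ⟨v, hv, hvB⟩ := Finset.not_subset.1 hAB
  obtain ⟨w, hw, hwA⟩ := Finset.not_subset.1 hBA
  have hsub : A ∪ B ⊆ {b, a} := fun x hx => by
    rcases Finset.mem_union.1 hx with hx | hx
    · simp [(h x hx w hw (ne_of_mem_of_not_mem hx hwA)).1]
    · simp [(h v hv x hx (ne_of_mem_of_not_mem hx hvB).symm).2]
  exact (Finset.card_le_card hsub).trans Finset.card_le_two

/-- The number of edges with a color outside `S` on the closed walk that runs through the
components of a linear forest in the order `L`. -/
def missingCount [DecidableEq C] (χ : Sym2 V → C) (S : Finset C) (L : List (List V)) : ℕ :=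
  (cycleColors χ L.flatten).countP (· ∉ S)

/-- An isolated vertex `v` is charged to the color `c` if `c` is the color of one of the edges
created when `v` is moved between the end `b` and the start `a` of the closed walk through `L`. -/
def IsCharged (χ : Sym2 V → C) (L : List (List V)) (a b : V) (c : C) (v : V) : Prop :=
  (v ≠ a ∧ χ s(a, v) = c) ∨ (v ≠ b ∧ χ s(b, v) = c) ∨
    ∃ X Y, L = X ++ [v] :: Y ∧ c ∈ linkColors χ X.flatten Y.flatten

lemma exists_notMem_of_missingCount_le [DecidableEq C] {S : Finset C} {X Y : List (List V)}
    {v a b : V} (hle : missingCount χ S (X ++ [v] :: Y) ≤ missingCount χ S ([v] :: (X ++ Y)))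
    (ha : X.flatten.head? = some a) (hb : Y.flatten.getLast? = some b) (hab : χ s(b, a) ∉ S) :
    ∃ c ∉ S, χ s(a, v) = c ∨ χ s(b, v) = c ∨ c ∈ linkColors χ X.flatten Y.flatten := by
  by_contra! h
  have hav : χ s(a, v) ∈ S := by_contra fun hc => (h _ hc).1 rfl
  have hbv : χ s(b, v) ∈ S := by_contra fun hc => (h _ hc).2.1 rfl
  have hXY : (linkColors χ X.flatten Y.flatten).countP (· ∉ S) = 0 :=
    Multiset.countP_eq_zero.2 fun c hc hcS => (h c hcS).2.2 hc
  have hL : cycleColors χ (X ++ [v] :: Y).flatten = pathColors χ X.flatten +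
      linkColors χ X.flatten [v] + (linkColors χ [v] Y.flatten + pathColors χ Y.flatten) +
      {χ s(b, a)} := by
    rw [cycleColors, linkColors_eq_singleton (p := b) (q := a) (by simp [List.getLast?_cons, hb])
      (by simp [ha]),
      List.flatten_append, List.flatten_cons, pathColors_append, pathColors_append,
      linkColors_append_right _ (by simp), pathColors_singleton]
    abel
  have hL' : cycleColors χ ([v] :: (X ++ Y)).flatten = {χ s(a, v)} + (pathColors χ X.flatten +
      linkColors χ X.flatten Y.flatten + pathColors χ Y.flatten) + {χ s(b, v)} := by
    rw [cycleColors, linkColors_eq_singleton (p := b) (q := v)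
      (by simp [List.getLast?_cons, hb]) rfl, List.flatten_cons, List.flatten_append,
      pathColors_append, pathColors_append, linkColors_eq_singleton (p := v) (q := a) rfl
      (by simp [ha]), Sym2.eq_swap, pathColors_singleton]
    abel
  rw [missingCount, missingCount, hL, hL'] at hle
  have countP_self (c : C) : Multiset.countP (· ∉ S) {c} = if c ∈ S then 0 else 1 :=
    (Multiset.countP_cons _ c 0).trans (by simp)
  simp only [Multiset.countP_add, countP_self, hXY, if_pos hav, if_pos hbv, if_neg hab] at hle
  omega

lemma exists_isCharged [DecidableEq C] {S : Finset C} {L : List (List V)} {a b : V}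
    (ha : L.flatten.head? = some a) (hb : L.flatten.getLast? = some b) (hne : a ≠ b)
    (hab : χ s(b, a) ∉ S) (hmin : ∀ L', L'.Perm L → missingCount χ S L ≤ missingCount χ S L')
    {v : V} (hv : [v] ∈ L) : ∃ c ∉ S, IsCharged χ L a b c v := by
  rcases eq_or_ne v a with rfl | hva
  · exact ⟨_, hab, .inr (.inl ⟨hne, rfl⟩)⟩
  rcases eq_or_ne v b with rfl | hvb
  · exact ⟨_, hab, .inl ⟨hne.symm, by rw [Sym2.eq_swap]⟩⟩
  obtain ⟨X, Y, rfl⟩ := List.append_of_mem hv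
  obtain ⟨c, hc, h⟩ := exists_notMem_of_missingCount_le
    (hmin ([v] :: (X ++ Y)) List.perm_middle.symm) (head?_flatten_of_append_cons hva ha)
    (getLast?_flatten_of_append_cons hvb hb) hab
  exact ⟨c, hc, h.imp (⟨hva, ·⟩) (Or.imp (⟨hvb, ·⟩) fun h => ⟨X, Y, rfl, h⟩)⟩

lemma IsSaturated.eq_of_shortcut {L : List (List V)} {c : C}
    (hc : IsSaturated χ (L : Multiset (List V)) c) {X Y X' Y' : List (List V)} {v w : V}
    (hv : L = X ++ [v] :: Y) (hvc : c ∈ linkColors χ X.flatten Y.flatten)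
    (hw : L = X' ++ [w] :: Y') (hwc : c ∈ linkColors χ X'.flatten Y'.flatten) : v = w := by
  have h := hv.symm.trans hw
  rcases List.append_eq_append_iff.1 h with ⟨M, rfl, hM⟩ | ⟨M, rfl, hM⟩
  · cases M with
    | nil => simp_all
    | cons q M =>
      obtain ⟨rfl, rfl⟩ := List.cons.inj hM
      subst hw
      rw [List.append_assoc] at hc
      exact (hc.notMem_linkColors hvc hwc).elim
  · cases M with
    | nil => simp_all
    | cons q M =>
      obtain ⟨rfl, rfl⟩ := List.cons.inj hM
      subst hv
      rw [List.append_assoc] at hc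
      exact (hc.notMem_linkColors hwc hvc).elim

open scoped Classical in
lemma card_isCharged_le [DecidableEq C] {B : Multiset (List V)}
    {R : Finset V} {S : Finset C} (h : IsExtremal χ B R.val S) {L : List (List V)}
    (hL : (L : Multiset (List V)) = B + singletons R.val) {a b : V}
    (ha : L.flatten.head? = some a) (hb : L.flatten.getLast? = some b) {c : C} (hc : c ∉ S) :
    (R.filter (IsCharged χ L a b c)).card ≤ 3 := by
  have hmem : ∀ v ∈ R, [v] ∈ L := fun v hv => by
    rw [← Multiset.mem_coe, hL]
    exact Multiset.mem_add.2 (.inr (Multiset.mem_map_of_mem _ hv))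
  have hdeg {u : V} (hu : IsEnd L.flatten u) :
      (R.filter fun v => v ≠ u ∧ χ s(u, v) = c).card ≤ 2 := by
    obtain ⟨p, hp, hpu⟩ := exists_isEnd_of_flatten hu
    exact h.card_filter_le (hL ▸ Multiset.mem_coe.2 hp) hpu hc
  have hsat : IsSaturated χ (L : Multiset (List V)) c := hL ▸ h.isSaturated c hc
  have hcross := card_union_le_two_of_cross (hdeg (.inl ha)) (hdeg (.inr hb)) (a := a) (b := b)
    fun v hv w hw hvw => by
      simp only [Finset.mem_filter] at hv hw
      exact hsat.eq_of_crossing ha hb (hmem v hv.1) (hmem w hw.1) hv.2.1 hw.2.1 hv.2.2 hw.2.2 hvw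
  have hshort : (R.filter fun v => ∃ X Y, L = X ++ [v] :: Y ∧
      c ∈ linkColors χ X.flatten Y.flatten).card ≤ 1 := Finset.card_le_one.2 fun v hv w hw => by
    obtain ⟨X, Y, hv, hvc⟩ := (Finset.mem_filter.1 hv).2
    obtain ⟨X', Y', hw, hwc⟩ := (Finset.mem_filter.1 hw).2
    exact hsat.eq_of_shortcut hv hvc hw hwc
  refine (Finset.card_le_card fun v hv => ?_).trans
    ((Finset.card_union_le _ _).trans (add_le_add hcross hshort))
  obtain ⟨hv, hva | hvb | hvL⟩ := Finset.mem_filter.1 hv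
  · exact Finset.mem_union_left _ (Finset.mem_union_left _ (Finset.mem_filter.2 ⟨hv, hva⟩))
  · exact Finset.mem_union_left _ (Finset.mem_union_right _ (Finset.mem_filter.2 ⟨hv, hvb⟩))
  · exact Finset.mem_union_right _ (Finset.mem_filter.2 ⟨hv, hvL⟩)

lemma IsExtremal.card_le [DecidableEq C] [Fintype C] {B : Multiset (List V)}
    {R : Finset V} {S : Finset C} (h : IsExtremal χ B R.val S) {L : List (List V)}
    (hL : (L : Multiset (List V)) = B + singletons R.val) {a b : V}
    (ha : L.flatten.head? = some a) (hb : L.flatten.getLast? = some b) (hne : a ≠ b)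
    (hab : χ s(b, a) ∉ S) (hmin : ∀ L', L'.Perm L → missingCount χ S L ≤ missingCount χ S L') :
    R.card ≤ 3 * Sᶜ.card := by
  classical
  have hcover : R ⊆ Sᶜ.biUnion fun c => R.filter (IsCharged χ L a b c) := fun v hv => by
    have hvL : [v] ∈ L := by
      rw [← Multiset.mem_coe, hL]
      exact Multiset.mem_add.2 (.inr (Multiset.mem_map_of_mem _ hv))
    obtain ⟨c, hc, hcv⟩ := exists_isCharged ha hb hne hab hmin hvL
    exact Finset.mem_biUnion.2 ⟨c, by simpa using hc, Finset.mem_filter.2 ⟨hv, hcv⟩⟩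
  rw [mul_comm]
  exact (Finset.card_le_card hcover).trans (Finset.card_biUnion_le_card_mul _ _ _ fun c hc =>
    card_isCharged_le h hL ha hb (by simpa using hc))

lemma exists_append_of_mem_pathColors_flatten {L : List (List V)} {c : C}
    (hc : c ∈ pathColors χ L.flatten) (hcL : c ∉ colors χ (L : Multiset (List V))) :
    ∃ X Y, L = X ++ Y ∧ c ∈ linkColors χ X.flatten Y.flatten := by
  induction L with
  | nil => simp at hc
  | cons p L ih =>
    rw [← Multiset.cons_coe, colors_cons, Multiset.mem_add, not_or] at hcL
    rw [List.flatten_cons, pathColors_append, Multiset.mem_add, Multiset.mem_add] at hc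
    rcases hc with (hc | hc) | hc
    · exact (hcL.1 hc).elim
    · exact ⟨[p], L, rfl, by simpa using hc⟩
    · obtain ⟨X, Y, rfl, hXY⟩ := ih hc hcL.2
      have hX : X.flatten ≠ [] := by
        intro h
        simp [h] at hXY
      exact ⟨p :: X, Y, rfl, by rwa [List.flatten_cons, linkColors_append_left _ _ hX]⟩

lemma exists_append_of_mem_cycleColors_flatten {L : List (List V)} {c : C}
    (hc : c ∈ cycleColors χ L.flatten) (hcL : c ∉ colors χ (L : Multiset (List V))) :
    ∃ X Y, L = X ++ Y ∧ c ∈ linkColors χ (Y ++ X).flatten (Y ++ X).flatten := by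
  rcases Multiset.mem_add.1 hc with hc | hc
  · obtain ⟨X, Y, rfl, hXY⟩ := exists_append_of_mem_pathColors_flatten hc hcL
    obtain ⟨p, q, hp, hq, rfl⟩ := mem_linkColors.1 hXY
    exact ⟨X, Y, rfl, mem_linkColors.2
      ⟨p, q, by simp [List.getLast?_append, hp], by simp [List.head?_append, hq], rfl⟩⟩
  · exact ⟨[], L, rfl, by simpa using hc⟩

lemma ne_of_head?_of_getLast? {l : List V} (hl : l.Nodup) (hlen : 2 ≤ l.length) {a b : V}
    (ha : l.head? = some a) (hb : l.getLast? = some b) : a ≠ b := by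
  match l, hlen with
  | x :: y :: l, _ =>
    obtain rfl : x = a := by simpa using ha
    rw [List.getLast?_cons_cons] at hb
    exact (ne_of_mem_of_not_mem (List.mem_of_getLast? hb) (List.nodup_cons.1 hl).1).symm

variable [DecidableEq C]

lemma exists_missingCount_le (χ : Sym2 V → C) (S : Finset C) (F : Multiset (List V)) :
    ∃ L : List (List V), (L : Multiset (List V)) = F ∧
      ∀ L', L'.Perm L → missingCount χ S L ≤ missingCount χ S L' := by
  obtain ⟨L, hL, hmin⟩ := exists_minimalFor_of_wellFoundedLT
    (fun L : List (List V) => (L : Multiset (List V)) = F) (missingCount χ S)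
    (Quot.exists_rep F)
  exact ⟨L, hL, fun L' hL' => le_of_not_gt fun h => h.not_ge
    (hmin ((Multiset.coe_eq_coe.2 hL').trans hL) h.le)⟩

lemma missingCount_append_comm (S : Finset C) (X Y : List (List V)) :
    missingCount χ S (X ++ Y) = missingCount χ S (Y ++ X) := by
  simp only [missingCount, List.flatten_append, cycleColors_append_comm]

variable [Fintype C]

lemma IsExtremal.four_mul_card_compl_le {B : Multiset (List V)} {R : Multiset V} {S : Finset C}
    (h : IsExtremal χ B R S) (hcard : 4 * Fintype.card C ≤ (verts B + R).card) :
    4 * Sᶜ.card ≤ R.card := by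
  have hB := card_verts_le (χ := χ) h.two_le_length
  simp only [h.colors_eq, Multiset.card_nsmul, Finset.card_val] at hB
  rw [Multiset.card_add] at hcard
  rw [Finset.card_compl]
  omega

lemma IsExtremal.cycleColors_count_ne_one {B : Multiset (List V)} {R : Finset V} {S : Finset C}
    (h : IsExtremal χ B R.val S) (hU : (verts B + R.val).Nodup)
    (hcard : 4 * Fintype.card C ≤ (verts B + R.val).card) {L : List (List V)}
    (hL : (L : Multiset (List V)) = B + singletons R.val)
    (hmin : ∀ L', L'.Perm L → missingCount χ S L ≤ missingCount χ S L') (c : C) :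
    (cycleColors χ L.flatten).count c ≠ 1 := by
  intro hone
  have hcolors : colors χ (L : Multiset (List V)) = 2 • S.val := by simp [hL, h.colors_eq]
  have hc : c ∉ S := fun hcS => by
    have hle : 2 • S.val ≤ cycleColors χ L.flatten :=
      hcolors ▸ (colors_le_pathColors_flatten χ L).trans (Multiset.le_add_right _ _)
    have hle := Multiset.count_le_of_le c hle
    rw [hone, Multiset.count_nsmul, Multiset.count_eq_one_of_mem S.nodup hcS] at hle
    omega
  obtain ⟨X, Y, rfl, hclose⟩ := exists_append_of_mem_cycleColors_flatten
    (Multiset.count_pos.1 (hone.symm ▸ one_pos)) (by simp [hcolors, two_nsmul, hc])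
  obtain ⟨b, a, hb, ha, rfl⟩ := mem_linkColors.1 hclose
  have hrot : ((Y ++ X : List (List V)) : Multiset (List V)) = B + singletons R.val :=
    (Multiset.coe_eq_coe.2 List.perm_append_comm).trans hL
  have hverts : ((Y ++ X).flatten : Multiset V) = verts B + R.val := by
    rw [← verts_coe, hrot, verts_add, verts_singletons]
  have hpos : 0 < Sᶜ.card := Finset.card_pos.2 ⟨_, Finset.mem_compl.2 hc⟩
  have hfour := h.four_mul_card_compl_le hcard
  have hne : a ≠ b := by
    refine ne_of_head?_of_getLast? (Multiset.coe_nodup.1 (hverts ▸ hU)) ?_ ha hb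
    rw [← Multiset.coe_card, hverts, Multiset.card_add]
    omega
  have hthree := h.card_le hrot ha hb hne hc fun L' hL' =>
    missingCount_append_comm S Y X ▸ hmin L' (hL'.trans List.perm_append_comm)
  rw [Finset.card_val] at hfour
  omega

theorem exists_cycleColors_count_ne_one (χ : Sym2 V → C) {U : Multiset V} (hU : U.Nodup)
    (hcard : 4 * Fintype.card C ≤ U.card) :
    ∃ l : List V, (l : Multiset V) = U ∧ ∀ c, (cycleColors χ l).count c ≠ 1 := by
  obtain ⟨B, R, S, rfl, h⟩ := exists_isExtremal χ U
  lift R to Finset V using (Multiset.nodup_add.1 hU).2.1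
  obtain ⟨L, hL, hmin⟩ := exists_missingCount_le χ S (B + singletons R.val)
  exact ⟨L.flatten, by rw [← verts_coe, hL, verts_add, verts_singletons],
    h.cycleColors_count_ne_one hU hcard hL hmin⟩

end Charging

section HamiltonCycle

variable {G : SimpleGraph V} {u v : V}

lemma map_edges_eq_pathColors (χ : Sym2 V → C) (p : G.Walk u v) :
    (p.edges.map χ : Multiset C) = pathColors χ p.support := by
  induction p with
  | nil => rfl
  | cons h p ih =>
    rw [SimpleGraph.Walk.support_cons, ← p.cons_tail_support, pathColors_cons_cons,
      p.cons_tail_support, ← ih]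
    rfl

lemma isHamiltonianCycle_cons [Fintype V] [DecidableEq V] {p : G.Walk u v} (hp : p.IsHamiltonian)
    (hV : 3 ≤ Fintype.card V) (h : G.Adj v u) : (p.cons h).IsHamiltonianCycle := by
  have hlen := hp.length_eq
  rw [SimpleGraph.Walk.isHamiltonianCycle_iff_isCycle_and_length_eq,
    SimpleGraph.Walk.isCycle_iff_isPath_tail_and_le_length, SimpleGraph.Walk.length_cons]
  exact ⟨⟨by simpa using hp.isPath, by omega⟩, by omega⟩

lemma exists_isHamiltonianCycle_top [Fintype V] [DecidableEq V] (χ : Sym2 V → C)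
    (hV : 3 ≤ Fintype.card V) {l : List V} (hl : (l : Multiset V) = Finset.univ.val) :
    ∃ (a : V) (w : (⊤ : SimpleGraph V).Walk a a), w.IsHamiltonianCycle ∧
      (w.edges.map χ : Multiset C) = cycleColors χ l := by
  have hnodup : l.Nodup := Multiset.coe_nodup.1 (hl ▸ Finset.univ.nodup)
  have hlen : l.length = Fintype.card V := by
    rw [← Multiset.coe_card, hl, Finset.card_val, Finset.card_univ]
  have hmem (v : V) : v ∈ l := by
    rw [← Multiset.mem_coe, hl]
    exact Finset.mem_univ_val v
  have hne : l ≠ [] := List.ne_nil_of_length_pos (by omega)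
  let p := SimpleGraph.Walk.ofSupport (G := ⊤) l hne hnodup.isChain
  have hsupp : p.support = l := SimpleGraph.Walk.support_ofSupport hne _
  have hp : p.IsHamiltonian := fun v => by
    rw [hsupp, List.count_eq_one_of_mem hnodup (hmem v)]
  have hends : l.getLast hne ≠ l.head hne := (ne_of_head?_of_getLast? hnodup (by omega)
    (List.head?_eq_some_head hne) (List.getLast?_eq_some_getLast hne)).symm
  refine ⟨_, p.cons hends, isHamiltonianCycle_cons hp hV hends, ?_⟩
  rw [SimpleGraph.Walk.edges_cons, List.map_cons, ← Multiset.cons_coe, map_edges_eq_pathColors,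
    hsupp, cycleColors, linkColors_eq_singleton (List.getLast?_eq_some_getLast hne)
      (List.head?_eq_some_head hne), add_comm, Multiset.singleton_add]

end HamiltonCycle

end UniqueRamsey

/-- **Theorem.** For `n ≥ 4`, the unique-Ramsey number of Hamilton cycles
satisfies `r_u(n, C_n) > n/4`: for every `r` with `1 ≤ r` and `r ≤ n/4`
(i.e. `4r ≤ n`) and every `r`-coloring of the edges of `K_n`, there is a
Hamilton cycle in which no color occurs exactly once. -/
theorem unique_ramsey_hamilton_cycle_lower (n r : ℕ) (hn : 4 ≤ n) (hr : 1 ≤ r)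
    (hrn : 4 * r ≤ n) (χ : Sym2 (Fin n) → Fin r) :
    ∃ (a : Fin n) (w : (⊤ : SimpleGraph (Fin n)).Walk a a), w.IsHamiltonianCycle ∧
      ∀ c : Fin r, (w.edges.filter (fun e => χ e = c)).length ≠ 1 := by
  obtain ⟨l, hl, hcount⟩ := UniqueRamsey.exists_cycleColors_count_ne_one χ
    (Finset.nodup Finset.univ) (by simpa using hrn)
  obtain ⟨a, w, hw, hcolors⟩ := UniqueRamsey.exists_isHamiltonianCycle_top χ (by simp; omega) hl
  refine ⟨a, w, hw, fun c => ?_⟩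
  have hfilter : (w.edges.filter fun e => χ e = c).length =
      (UniqueRamsey.cycleColors χ l).count c := by
    rw [← List.countP_eq_length_filter, ← hcolors, Multiset.coe_count, List.count, List.countP_map]
    rfl
  exact hfilter ▸ hcount c
end

section
/- Let n ≥ 4 be an even integer and let G be an n-vertex graph with minimum degree δ(G) ≥ n/2 + 2, whose edges are colored with 2 colors. If G contains an odd-chromatic copy of the 6-cycle C_6, then G contains an even-chromatic Hamilton cycle. -/
/-!
Among the Hamilton paths of the complete graph with prescribed ends, take one with as few non-edges
of `G` as possible: if any two non-adjacent vertices have degree sum above `|V|`, a 2-opt move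
removes a remaining non-edge. So, when few vertices are deleted from a graph with
`|V| + 4 ≤ 2 δ(G)`, the rest has a Hamilton path between any two of its vertices.

Two paths with the same ends and the same vertex set but opposite parities thus give an even
Hamilton cycle: close both up with one path through all other vertices. An odd `4`-cycle gives such
a pair of paths, and so does an odd hexagon with a chord between vertices at distance two. If there
is neither, no vertex is adjacent to more than three vertices of the odd hexagon, since replacing a
hexagon vertex by another common neighbour of its two neighbours keeps the hexagon odd. But the six
degrees of the hexagon add up to at least `6 δ(G) > 3 |V|`.
-/

open Finset SimpleGraph

namespace EvenHamilton

section HamiltonConnected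

variable {V : Type*}

lemma exists_isPath_top_mem_support_iff (S : Finset V) {u v : V} (huv : u ≠ v) (hu : u ∉ S)
    (hv : v ∉ S) :
    ∃ p : (⊤ : SimpleGraph V).Walk u v, p.IsPath ∧ ∀ w, w ∈ p.support ↔ w = u ∨ w ∈ S ∨ w = v := by
  classical
  induction S using Finset.induction_on generalizing u with
  | empty => exact ⟨.cons huv .nil, by simp [huv], by simp⟩
  | insert x S hx ih =>
    rw [mem_insert, not_or] at hu hv
    obtain ⟨p, hp, hmem⟩ := ih (Ne.symm hv.1) hx hv.2
    exact ⟨.cons hu.1 p, by simp [Walk.cons_isPath_iff, hp, hmem, hu, huv],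
      fun w ↦ by simp [hmem, or_assoc]⟩

variable [DecidableEq V] {G : SimpleGraph V} [DecidableRel G.Adj]

lemma degree_eq_countP_support [Fintype V] {H : SimpleGraph V} {u v : V} {p : H.Walk u v}
    (hp : p.IsHamiltonian) (x : V) : G.degree x = p.support.countP (G.Adj x ·) := by
  rw [List.countP_eq_length_filter, ← G.card_neighborFinset_eq_degree,
    ← List.toFinset_card_of_nodup (hp.isPath.support_nodup.filter _)]
  congr 1
  ext w
  simp [hp.mem_support w]

variable (G) in
/-- The number of steps of a walk in the complete graph that are not edges of `G`. The Hamilton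
paths of `G` are those of the complete graph for which it vanishes. -/
def numNonEdges {u v : V} (p : (⊤ : SimpleGraph V).Walk u v) : ℕ :=
  p.edges.countP (· ∉ G.edgeSet)

-- The 2-opt move: reversing the segment `q` trades the steps `st` and `xy` for `sx` and `ty`.
lemma exists_numNonEdges_lt_of_adj {u v s t x y : V} {p : (⊤ : SimpleGraph V).Walk u s}
    {q : (⊤ : SimpleGraph V).Walk t x} {r : (⊤ : SimpleGraph V).Walk y v}
    {hst : (⊤ : SimpleGraph V).Adj s t} {hxy : (⊤ : SimpleGraph V).Adj x y}
    (hp : ((((p.append hst.toWalk).append q).append hxy.toWalk).append r).IsHamiltonian)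
    (hsx : G.Adj s x) (hty : G.Adj t y) (hbad : ¬ G.Adj s t ∨ ¬ G.Adj x y) :
    ∃ p' : (⊤ : SimpleGraph V).Walk u v, p'.IsHamiltonian ∧ numNonEdges G p' <
      numNonEdges G ((((p.append hst.toWalk).append q).append hxy.toWalk).append r) := by
  refine ⟨p.append (.cons hsx.ne (q.reverse.append (.cons hty.ne r))), fun w ↦ ?_, ?_⟩
  · simpa [Walk.support_append] using hp w
  · simp only [numNonEdges, Walk.edges_append, Walk.edges_cons, Walk.edges_nil, Walk.edges_reverse,
      List.countP_append, List.countP_cons, List.countP_nil, List.countP_reverse, mem_edgeSet, hsx,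
      hty]
    grind

lemma countP_add_countP_lt_length {α : Type*} {l : List α} {P Q : α → Prop} [DecidablePred P]
    [DecidablePred Q] (h : ∀ a ∈ l, P a → ¬ Q a) {a : α} (ha : a ∈ l) (hP : ¬ P a) (hQ : ¬ Q a) :
    l.countP P + l.countP Q < l.length := by
  have hor : l.countP P + l.countP Q ≤ l.countP (fun b ↦ P b ∨ Q b) := by
    clear ha
    induction l with grind
  exact hor.trans_lt (List.countP_lt_length_iff.2 ⟨a, ha, by simp [hP, hQ]⟩)

lemma exists_dart_adj_of_lt_degree_add_degree [Fintype V] {H : SimpleGraph V} {u v : V}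
    {p : H.Walk u v} (hp : p.IsHamiltonian) {d : H.Dart} (hd : d ∈ p.darts)
    (hdeg : Fintype.card V < G.degree d.fst + G.degree d.snd) :
    ∃ e ∈ p.darts, e ≠ d ∧ G.Adj d.fst e.fst ∧ G.Adj d.snd e.snd := by
  suffices ∃ e ∈ p.darts, G.Adj d.fst e.fst ∧ G.Adj d.snd e.snd by
    obtain ⟨e, he, hfst, hsnd⟩ := this
    exact ⟨e, he, by rintro rfl; exact hfst.ne rfl, hfst, hsnd⟩
  by_contra! h
  have hfst : G.degree d.fst ≤ p.darts.countP (G.Adj d.fst ·.fst) + 1 := by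
    rw [degree_eq_countP_support hp, ← p.map_fst_darts_append, List.countP_append, List.countP_map]
    exact Nat.add_le_add_left List.countP_le_length _
  have hsnd : G.degree d.snd ≤ p.darts.countP (G.Adj d.snd ·.snd) + 1 := by
    rw [degree_eq_countP_support hp, ← p.cons_map_snd_darts, List.countP_cons, List.countP_map]
    exact Nat.add_le_add_left (by split <;> simp) _
  have hlt := countP_add_countP_lt_length h hd (G.irrefl) (G.irrefl)
  rw [p.length_darts] at hlt
  have := p.length_support
  have := hp.length_support
  omega

lemma exists_numNonEdges_lt [Fintype V] {u v : V}
    (hG : ∀ x y, x ≠ y → ¬ G.Adj x y → Fintype.card V < G.degree x + G.degree y)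
    {p : (⊤ : SimpleGraph V).Walk u v} (hp : p.IsHamiltonian) (hbad : numNonEdges G p ≠ 0) :
    ∃ p' : (⊤ : SimpleGraph V).Walk u v, p'.IsHamiltonian ∧ numNonEdges G p' < numNonEdges G p := by
  obtain ⟨d, hd, hdG⟩ : ∃ d ∈ p.darts, ¬ G.Adj d.fst d.snd := by
    by_contra! h
    refine hbad (List.countP_eq_zero.2 fun e he ↦ ?_)
    obtain ⟨d, hd, rfl⟩ := List.mem_map.1 he
    simpa [Dart.edge] using h d hd
  obtain ⟨e, he, hed, hfst, hsnd⟩ :=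
    exists_dart_adj_of_lt_degree_add_degree hp hd (hG _ _ d.adj hdG)
  obtain ⟨q, r, hqr⟩ := (p.isSubwalk_toWalk_adj_iff_mem_darts).2 hd
  subst hqr
  have he' : e ∈ q.darts ∨ e ∈ r.darts := by
    simpa [hed] using he
  rcases he' with he | he
  · obtain ⟨q₁, q₂, rfl⟩ := (q.isSubwalk_toWalk_adj_iff_mem_darts).2 he
    exact exists_numNonEdges_lt_of_adj hp hfst.symm hsnd.symm (.inr hdG)
  · obtain ⟨r₁, r₂, rfl⟩ := (r.isSubwalk_toWalk_adj_iff_mem_darts).2 he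
    simp only [Walk.append_assoc] at hp ⊢
    exact exists_numNonEdges_lt_of_adj hp hfst hsnd (.inl hdG)

theorem exists_isHamiltonian_of_ore [Fintype V]
    (hG : ∀ x y, x ≠ y → ¬ G.Adj x y → Fintype.card V < G.degree x + G.degree y)
    {u v : V} (huv : u ≠ v) : ∃ p : G.Walk u v, p.IsHamiltonian := by
  obtain ⟨p₀, hp₀, hmem⟩ :=
    exists_isPath_top_mem_support_iff ({u, v} : Finset V)ᶜ huv (by simp) (by simp)
  obtain ⟨p, hp, hmin⟩ := exists_minimalFor_of_wellFoundedLT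
    (fun p : (⊤ : SimpleGraph V).Walk u v ↦ p.IsHamiltonian) (numNonEdges G)
    ⟨p₀, hp₀.isHamiltonian_of_mem fun w ↦ (hmem w).2 <| by simp; tauto⟩
  have hzero : numNonEdges G p = 0 := by
    by_contra h
    obtain ⟨p', hp', hlt⟩ := exists_numNonEdges_lt hG hp h
    exact hlt.not_ge (hmin hp' hlt.le)
  have hedges : ∀ e ∈ p.edges, e ∈ G.edgeSet := by
    simpa [numNonEdges, List.countP_eq_zero] using hzero
  exact ⟨p.transfer G hedges, fun w ↦ by simpa using hp w⟩

end HamiltonConnected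

section Outside

variable {V : Type*} {G : SimpleGraph V} [DecidableRel G.Adj]

lemma exists_isPath_mem_support_iff_mem {S : Finset V}
    (hS : ∀ v ∈ S, #S < 2 * #{w ∈ S | G.Adj v w}) {u v : V} (hu : u ∈ S) (hv : v ∈ S)
    (huv : u ≠ v) : ∃ p : G.Walk u v, p.IsPath ∧ ∀ w, w ∈ p.support ↔ w ∈ S := by
  classical
  have hdeg (x : (S : Set V)) : (G.induce (S : Set V)).degree x = #{w ∈ S | G.Adj x w} := by
    rw [← card_neighborFinset_eq_degree, ← card_map (.subtype (· ∈ (S : Set V)))]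
    congr 1
    ext w
    simp [and_comm]
  obtain ⟨p, hp⟩ := exists_isHamiltonian_of_ore (G := G.induce (S : Set V))
    (fun x y _ _ ↦ by
      have hx := hS x x.2
      have hy := hS y y.2
      simp only [hdeg, Fintype.card_coe, coe_sort_coe]
      omega) (u := ⟨u, hu⟩) (v := ⟨v, hv⟩) (by simpa using huv)
  have hsupp (w : V) :
      w ∈ (p.map (Embedding.induce (G := G) (S : Set V)).toHom).support ↔ w ∈ S := by
    rw [Walk.support_map, List.mem_map]
    exact ⟨by rintro ⟨x, -, rfl⟩; exact x.2, fun hw ↦ ⟨⟨w, hw⟩, hp.mem_support _, rfl⟩⟩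
  exact ⟨_, hp.isPath.map (Embedding.induce (G := G) (S : Set V)).injective, hsupp⟩

variable [Fintype V]

lemma card_filter_compl_add_card_filter [DecidableEq V] (T : Finset V) (v : V) :
    #{w ∈ Tᶜ | G.Adj v w} + #{w ∈ T | G.Adj v w} = G.degree v := by
  rw [← G.card_neighborFinset_eq_degree, G.neighborFinset_eq_filter]
  simp only [card_filter]
  exact sum_compl_add_sum _ _

lemma exists_isPath_mem_support_iff_notMem {T : Finset V} {k : ℕ}
    (hk : ∀ v, #{w ∈ T | G.Adj v w} ≤ k) (hδ : Fintype.card V + 2 * k < 2 * G.minDegree + #T)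
    {u v : V} (hu : u ∉ T) (hv : v ∉ T) (huv : u ≠ v) :
    ∃ p : G.Walk u v, p.IsPath ∧ ∀ w, w ∈ p.support ↔ w ∉ T := by
  classical
  simp only [← mem_compl] at hu hv ⊢
  refine exists_isPath_mem_support_iff_mem (fun x _ ↦ ?_) hu hv huv
  have := card_filter_compl_add_card_filter (G := G) T x
  have := G.minDegree_le_degree x
  have := hk x
  have := T.card_add_card_compl
  omega

lemma exists_isPath_mem_support_iff_notMem_or_eq {T : Finset V} {k : ℕ}
    (hk : ∀ v, #{w ∈ T | G.Adj v w} ≤ k) (hδ : Fintype.card V + 2 * k < 2 * G.minDegree + #T)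
    (hδk : k + 2 ≤ G.minDegree) {u v : V} (hu : u ∈ T) (hv : v ∈ T) (huv : u ≠ v) :
    ∃ p : G.Walk u v, p.IsPath ∧ ∀ w, w ∈ p.support ↔ w ∉ T ∨ w = u ∨ w = v := by
  classical
  have htwo (x : V) : 1 < #{w ∈ Tᶜ | G.Adj x w} := by
    have := card_filter_compl_add_card_filter (G := G) T x
    have := G.minDegree_le_degree x
    have := hk x
    omega
  obtain ⟨u', hu'⟩ := card_pos.1 (zero_lt_one.trans (htwo u))
  obtain ⟨v', hv', hne⟩ := exists_mem_ne (htwo v) u'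
  simp only [mem_filter, mem_compl] at hu' hv'
  obtain ⟨p, hp, hsupp⟩ := exists_isPath_mem_support_iff_notMem hk hδ hu'.1 hv'.1 hne.symm
  refine ⟨.cons hu'.2 (p.concat hv'.2.symm), ?_, fun w ↦ ?_⟩
  · simp [Walk.cons_isPath_iff, Walk.concat_isPath_iff, Walk.support_concat, hp, hsupp, hu, hv, huv]
  · simp only [Walk.support_cons, Walk.support_concat, List.mem_cons, List.mem_append, hsupp,
      List.not_mem_nil, or_false]
    tauto

lemma exists_notMem_adj_adj {F : Finset V} (hF : Fintype.card V + #F < 2 * G.minDegree) (u v : V) :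
    ∃ w ∉ F, G.Adj u w ∧ G.Adj v w := by
  classical
  have hinter : #F < #(G.neighborFinset u ∩ G.neighborFinset v) := by
    have := card_union_add_card_inter (G.neighborFinset u) (G.neighborFinset v)
    have := card_le_univ (G.neighborFinset u ∪ G.neighborFinset v)
    have := G.minDegree_le_degree u
    have := G.minDegree_le_degree v
    simp only [card_neighborFinset_eq_degree] at *
    omega
  obtain ⟨w, hw, hwF⟩ := exists_mem_notMem_of_card_lt_card hinter
  exact ⟨w, hwF, by simpa using hw⟩

lemma minDegree_add_card_le {T : Finset V} {v : V} (hT : ∀ w ∈ T, ¬ G.Adj v w) :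
    G.minDegree + #T ≤ Fintype.card V := by
  classical
  have := card_filter_compl_add_card_filter (G := G) T v
  have := card_filter_le Tᶜ (G.Adj v ·)
  have := G.minDegree_le_degree v
  have := T.card_add_card_compl
  have hzero : #{w ∈ T | G.Adj v w} = 0 := by rwa [card_eq_zero, filter_eq_empty_iff]
  omega

end Outside

section Switch

variable {V : Type*} [DecidableEq V] {G : SimpleGraph V}

lemma isHamiltonianCycle_append {u v : V} {p : G.Walk u v} {q : G.Walk v u} (hp : p.IsPath)
    (hq : q.IsPath) (hlen : 1 < p.length)
    (hsupp : ∀ w, w ∈ q.support ↔ w ∉ p.support ∨ w = u ∨ w = v) :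
    (p.append q).IsHamiltonianCycle := by
  have hdisj : p.support.tail.Disjoint q.support.tail := by
    intro w hwp hwq
    have hp' := hp.support_nodup
    have hq' := hq.support_nodup
    rw [← Walk.cons_tail_support, List.nodup_cons] at hp' hq'
    have := (hsupp w).1 (List.mem_of_mem_tail hwq)
    have := List.mem_of_mem_tail hwp
    grind
  have hcycle := hp.isCycle_append hq hdisj (.inl hlen)
  refine Walk.isHamiltonianCycle_iff_isCycle_and_support_count_tail_eq_one.2
    ⟨hcycle, fun w ↦ List.count_eq_one_of_mem hcycle.support_nodup ?_⟩
  rw [Walk.tail_support_append, List.mem_append]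
  have := hsupp w
  have := p.mem_support_iff (w := w)
  have := q.mem_support_iff (w := w)
  have := Walk.end_mem_tail_support (p := p) (by rw [← Walk.length_eq_zero_iff]; omega)
  grind

variable (G) in
/-- `G` has a Hamilton cycle of total weight zero. For the indicator weight of a colour class, this
is a Hamilton cycle on which that colour occurs an even number of times. -/
def HasEvenHamiltonCycle (g : Sym2 V → ZMod 2) : Prop :=
  ∃ (a : V) (w : G.Walk a a), w.IsHamiltonianCycle ∧ (w.edges.map g).sum = 0

variable {g : Sym2 V → ZMod 2}

lemma HasEvenHamiltonCycle.of_switch {u v : V} {p q : G.Walk u v} {r : G.Walk v u}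
    (hp : p.IsPath) (hq : q.IsPath) (hr : r.IsPath) (hplen : 1 < p.length) (hqlen : 1 < q.length)
    (hpq : ∀ w, w ∈ p.support ↔ w ∈ q.support)
    (hodd : (p.edges.map g).sum + (q.edges.map g).sum = 1)
    (hsupp : ∀ w, w ∈ r.support ↔ w ∉ p.support ∨ w = u ∨ w = v) : HasEvenHamiltonCycle G g := by
  by_cases heven : ((p.append r).edges.map g).sum = 0
  · exact ⟨u, p.append r, isHamiltonianCycle_append hp hr hplen hsupp, heven⟩
  · refine ⟨u, q.append r, isHamiltonianCycle_append hq hr hqlen (by simpa [hpq] using hsupp), ?_⟩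
    simp only [Walk.edges_append, List.map_append, List.sum_append] at heven ⊢
    have hone : (p.edges.map g).sum + (r.edges.map g).sum = 1 :=
      Fin.eq_one_of_ne_zero _ heven
    grind

variable [Fintype V] [DecidableRel G.Adj]

variable (G) in
/-- Every closed walk of length four has weight zero. Degenerate walks satisfy this trivially, so
the content is that every `4`-cycle of `G` has weight zero. -/
def FourWalksEven (g : Sym2 V → ZMod 2) : Prop :=
  ∀ ⦃a b c d : V⦄, G.Adj a b → G.Adj b c → G.Adj c d → G.Adj d a →
    g s(a, b) + g s(b, c) + g s(c, d) + g s(d, a) = 0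

lemma fourWalksEven_or_hasEvenHamiltonCycle (hδ : Fintype.card V + 4 ≤ 2 * G.minDegree)
    (g : Sym2 V → ZMod 2) : FourWalksEven G g ∨ HasEvenHamiltonCycle G g := by
  refine or_iff_not_imp_right.2 fun hno a b c d hab hbc hcd hda ↦ by_contra fun hsum ↦ hno ?_
  have hac : a ≠ c := by
    rintro rfl
    grind [Sym2.eq_swap]
  have hbd : b ≠ d := by
    rintro rfl
    grind [Sym2.eq_swap]
  have hodd : g s(a, b) + g s(b, c) + g s(d, c) + g s(a, d) = 1 := by
    rw [Sym2.eq_swap (a := d) (b := c), Sym2.eq_swap (a := a) (b := d)]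
    exact Fin.eq_one_of_ne_zero _ hsum
  obtain ⟨y, hy, hby, hdy⟩ := exists_notMem_adj_adj (G := G) (F := {a, c})
    (by have := card_le_two (a := a) (b := c); omega) b d
  have hcard : #{b, d, y} = 3 := card_eq_three.2 ⟨b, d, y, hbd, hby.ne, hdy.ne, rfl⟩
  simp only [mem_insert, mem_singleton, not_or] at hy
  obtain ⟨r, hr, hsupp⟩ := exists_isPath_mem_support_iff_notMem (G := G) (T := {b, d, y})
    (fun v ↦ card_filter_le _ _) (by omega) (u := c) (v := a)
    (by simp [hbc.ne', hcd.ne, Ne.symm hy.2]) (by simp [hab.ne, hda.ne', Ne.symm hy.1]) hac.symm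
  -- Each edge of the `4`-cycle lies on exactly one of the two paths, and `by`, `dy` lie on both.
  let p := Walk.cons hab (.cons hby (.cons hdy.symm (.cons hcd.symm .nil)))
  let q := Walk.cons hda.symm (.cons hdy (.cons hby.symm (.cons hbc .nil)))
  refine .of_switch (p := p) (q := q) ?_ ?_ hr (by simp [p]) (by simp [q]) ?_ ?_ ?_
  · simp only [p, Walk.cons_isPath_iff, Walk.isPath_iff_nil, Walk.nil_nil, Walk.support_cons,
      Walk.support_nil, List.mem_cons, List.not_mem_nil, or_false, true_and, not_or]
    grind [G.ne_of_adj]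
  · simp only [q, Walk.cons_isPath_iff, Walk.isPath_iff_nil, Walk.nil_nil, Walk.support_cons,
      Walk.support_nil, List.mem_cons, List.not_mem_nil, or_false, true_and, not_or]
    grind [G.ne_of_adj]
  · simp only [p, q, Walk.support_cons, Walk.support_nil, List.mem_cons, List.not_mem_nil, or_false]
    grind
  · simp only [p, q, Walk.edges_cons, Walk.edges_nil, List.map_cons, List.map_nil, List.sum_cons,
      List.sum_nil, Sym2.eq_swap (a := y)]
    linear_combination hodd + CharTwo.add_self_eq_zero (g s(b, y)) +
      CharTwo.add_self_eq_zero (g s(d, y))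
  · simp only [p, hsupp, mem_insert, mem_singleton, not_or, Walk.support_cons, Walk.support_nil,
      List.mem_cons, List.not_mem_nil, or_false]
    grind [G.ne_of_adj]

end Switch

section Hexagon

variable {V : Type*} {G : SimpleGraph V} {g : Sym2 V → ZMod 2} {x : Fin 6 → V}

variable (G g x) in
/-- The vertices `x 0, …, x 5` form, in this cyclic order, a `6`-cycle of `G` of odd weight. Indices
are taken modulo `6`. -/
structure IsOddHexagon : Prop where
  injective : Function.Injective x
  adj (i : Fin 6) : G.Adj (x i) (x (i + 1))
  sum_eq_one : ∑ i, g s(x i, x (i + 1)) = 1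

namespace IsOddHexagon

lemma rotate (h : IsOddHexagon G g x) (k : Fin 6) : IsOddHexagon G g (fun i ↦ x (i + k)) where
  injective := h.injective.comp (add_left_injective k)
  adj i := by simpa only [add_right_comm] using h.adj (i + k)
  sum_eq_one := by
    simp only [add_right_comm _ 1 k]
    rw [← h.sum_eq_one]
    exact Equiv.sum_comp (Equiv.addRight k) fun i ↦ g s(x i, x (i + 1))

lemma sum_edges_eq_one (h : IsOddHexagon G g x) :
    g s(x 0, x 1) + g s(x 1, x 2) + g s(x 2, x 3) + g s(x 3, x 4) + g s(x 4, x 5) +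
      g s(x 5, x 0) = 1 := by
  simpa [Fin.sum_univ_six] using h.sum_eq_one

lemma not_adj_opposite (h : IsOddHexagon G g x) (hfour : FourWalksEven G g) :
    ¬ G.Adj (x 0) (x 3) := by
  intro hadj
  have h₁ : g s(x 0, x 1) + g s(x 1, x 2) + g s(x 2, x 3) + g s(x 0, x 3) = 0 := by
    rw [Sym2.eq_swap (a := x 0) (b := x 3)]
    exact hfour (h.adj 0) (h.adj 1) (h.adj 2) hadj.symm
  have h₂ : g s(x 0, x 3) + g s(x 3, x 4) + g s(x 4, x 5) + g s(x 5, x 0) = 0 :=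
    hfour hadj (h.adj 3) (h.adj 4) (h.adj 5)
  have := h.sum_edges_eq_one
  grind

lemma not_adj_alternate (h : IsOddHexagon G g x) (hfour : FourWalksEven G g) {v : V}
    (h0 : G.Adj v (x 0)) (h2 : G.Adj v (x 2)) : ¬ G.Adj v (x 4) := by
  intro h4
  have h₁ := hfour h0 (h.adj 0) (h.adj 1) h2.symm
  have h₂ := hfour h2 (h.adj 2) (h.adj 3) h4.symm
  have h₃ := hfour h4 (h.adj 4) (h.adj 5) h0.symm
  simp only [Sym2.eq_swap (a := v)] at h₁ h₂ h₃
  have := h.sum_edges_eq_one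
  simp only [zero_add, Fin.reduceAdd] at h₁ h₂ h₃
  grind

lemma update_one (h : IsOddHexagon G g x) (hfour : FourWalksEven G g) {w : V}
    (hw : ∀ i, i ≠ 1 → w ≠ x i) (h0 : G.Adj w (x 0)) (h2 : G.Adj w (x 2)) :
    IsOddHexagon G g (Function.update x 1 w) where
  injective := by
    intro i j hij
    have := h.injective (a₁ := i) (a₂ := j)
    grind [Function.update_apply]
  adj i := by
    fin_cases i
    · simpa using h0.symm
    · simpa using h2
    · simpa using h.adj 2
    · simpa using h.adj 3
    · simpa using h.adj 4
    · simpa using h.adj 5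
  sum_eq_one := by
    have hsum := h.sum_edges_eq_one
    have hw : g s(x 0, w) + g s(x 0, x 1) + g s(x 1, x 2) + g s(w, x 2) = 0 := by
      rw [Sym2.eq_swap (a := x 0) (b := w), Sym2.eq_swap (a := w) (b := x 2)]
      exact hfour h0 (h.adj 0) (h.adj 1) h2.symm
    have : g s(x 0, w) + g s(w, x 2) + g s(x 2, x 3) + g s(x 3, x 4) + g s(x 4, x 5) +
        g s(x 5, x 0) = 1 := by
      grind
    simpa [Fin.sum_univ_six] using this

variable [DecidableRel G.Adj]

lemma card_filter_adj_add_two_le (h : IsOddHexagon G g x) (hfour : FourWalksEven G g)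
    {T : Finset V} (hT : ∀ i, x i ∈ T) (v : V) : #{w ∈ T | G.Adj v w} + 2 ≤ #T := by
  classical
  obtain ⟨i, hi, hvi⟩ : ∃ i ∈ ({0, 2, 4} : Finset (Fin 6)), ¬ G.Adj v (x i) := by
    by_contra! hadj
    exact h.not_adj_alternate hfour (hadj 0 (by simp)) (hadj 2 (by simp)) (hadj 4 (by simp))
  obtain ⟨j, hj, hvj⟩ : ∃ j ∈ ({1, 3, 5} : Finset (Fin 6)), ¬ G.Adj v (x j) := by
    by_contra! hadj
    exact (h.rotate 1).not_adj_alternate hfour (hadj 1 (by simp)) (hadj 3 (by simp))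
      (hadj 5 (by simp))
  have hij : i ≠ j :=
    (by decide : Disjoint ({0, 2, 4} : Finset (Fin 6)) {1, 3, 5}).forall_ne_finset hi hj
  rw [← card_pair (h.injective.ne hij), ← card_union_of_disjoint]
  · exact card_le_card (by grind)
  · simp [hvi, hvj]

variable [Fintype V]

lemma exists_link (h : IsOddHexagon G g x) (hfour : FourWalksEven G g)
    (hδ : Fintype.card V + 4 ≤ 2 * G.minDegree) :
    ∃ m : G.Walk (x 2) (x 4), m.IsPath ∧ m.length ≤ 2 ∧ m.length + 5 ≤ G.minDegree ∧
      x 0 ∉ m.support ∧ x 1 ∉ m.support ∧ x 3 ∉ m.support ∧ x 5 ∉ m.support := by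
  classical
  have hne {i j : Fin 6} (hij : i ≠ j) : x i ≠ x j := h.injective.ne hij
  have h03 : ¬ G.Adj (x 0) (x 3) := h.not_adj_opposite hfour
  have h14 : ¬ G.Adj (x 1) (x 4) := (h.rotate 1).not_adj_opposite hfour
  have h25 : ¬ G.Adj (x 2) (x 5) := (h.rotate 2).not_adj_opposite hfour
  by_cases h24 : G.Adj (x 2) (x 4)
  · have hcard := minDegree_add_card_le (G := G) (T := {x 0, x 3}) (v := x 0) (by simp [h03])
    rw [card_pair (hne (by decide))] at hcard
    refine ⟨h24.toWalk, by simp [h24.ne], by simp, by simp; omega, ?_⟩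
    simp [h.injective.eq_iff]
  · have hcard := minDegree_add_card_le (G := G) (T := {x 2, x 4, x 5}) (v := x 2)
      (by simp [h24, h25])
    rw [card_eq_three.2 ⟨_, _, _, hne (by decide), hne (by decide), hne (by decide), rfl⟩] at hcard
    obtain ⟨y, hy, h2y, h4y⟩ := exists_notMem_adj_adj (G := G) (F := {x 0, x 3})
      (by have := card_le_two (a := x 0) (b := x 3); omega) (x 2) (x 4)
    simp only [mem_insert, mem_singleton, not_or] at hy
    have hy1 : y ≠ x 1 := by rintro rfl; exact h14 h4y.symm
    have hy5 : y ≠ x 5 := by rintro rfl; exact h25 h2y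
    refine ⟨.cons h2y h4y.symm.toWalk, ?_, by simp, by simp; omega, ?_⟩
    · simp [Walk.cons_isPath_iff, h2y.ne, h4y.ne', h.injective.eq_iff]
    · simp [h.injective.eq_iff, Ne.symm hy.1, Ne.symm hy.2, hy1.symm, hy5.symm]

variable [DecidableEq V]

lemma hasEvenHamiltonCycle_of_adj (h : IsOddHexagon G g x) (hfour : FourWalksEven G g)
    (hδ : Fintype.card V + 4 ≤ 2 * G.minDegree) (h15 : G.Adj (x 1) (x 5)) :
    HasEvenHamiltonCycle G g := by
  obtain ⟨m, hm, hlen, hδm, h0, h1, h3, h5⟩ := h.exists_link hfour hδ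
  -- Each hexagon edge lies on exactly one of the two paths, and all their other edges on both.
  let p : G.Walk (x 0) (x 3) :=
    .cons (h.adj 0) (.cons h15 (.cons (h.adj 4).symm (m.reverse.concat (h.adj 2))))
  let q : G.Walk (x 0) (x 3) :=
    .cons (h.adj 5).symm (.cons h15.symm (.cons (h.adj 1) (m.concat (h.adj 3).symm)))
  have hp : p.IsPath := by
    simp [p, Walk.cons_isPath_iff, Walk.concat_isPath_iff, Walk.support_concat,
      h.injective.eq_iff, *]
  have hq : q.IsPath := by
    simp [q, Walk.cons_isPath_iff, Walk.concat_isPath_iff, Walk.support_concat,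
      h.injective.eq_iff, *]
  have hcard : #p.support.toFinset = m.length + 5 := by
    rw [List.toFinset_card_of_nodup hp.support_nodup]
    simp [p]
  have hT (i : Fin 6) : x i ∈ p.support.toFinset := by
    fin_cases i <;> simp [p, Walk.support_concat]
  obtain ⟨r, hr, hsupp⟩ := exists_isPath_mem_support_iff_notMem_or_eq (G := G)
    (T := p.support.toFinset) (k := m.length + 3)
    (fun v ↦ by have := h.card_filter_adj_add_two_le hfour hT v; omega) (by omega) (by omega)
    (hT 3) (hT 0) (h.injective.ne (by decide))
  refine .of_switch hp hq hr (by simp [p]) (by simp [q]) ?_ ?_ ?_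
  · simp only [p, q, Walk.support_cons, Walk.support_concat, Walk.support_reverse, List.mem_cons,
      List.mem_append, List.mem_reverse, List.not_mem_nil, or_false]
    tauto
  · have hsum := h.sum_edges_eq_one
    simp only [p, q, Walk.edges_cons, Walk.edges_concat, Walk.edges_reverse, List.concat_eq_append,
      List.map_cons, List.map_append, List.map_reverse, List.map_nil, List.sum_cons,
      List.sum_append, List.sum_reverse, List.sum_nil, Sym2.eq_swap (a := x 0) (b := x 5),
      Sym2.eq_swap (a := x 4)]
    grind
  · simp only [hsupp, List.mem_toFinset]
    tauto

lemma not_adj_of_adj_of_adj (h : IsOddHexagon G g x) (hfour : FourWalksEven G g)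
    (hδ : Fintype.card V + 4 ≤ 2 * G.minDegree) (hno : ¬ HasEvenHamiltonCycle G g) {w : V}
    (h0 : G.Adj w (x 0)) (h2 : G.Adj w (x 2)) : ¬ G.Adj w (x 3) ∧ ¬ G.Adj w (x 5) := by
  have hw (i : Fin 6) (hi : i ≠ 1) : w ≠ x i := by
    rintro rfl
    fin_cases i
    · exact h0.ne rfl
    · exact hi rfl
    · exact h2.ne rfl
    · exact h.not_adj_opposite hfour h0.symm
    · exact hno ((h.rotate 5).hasEvenHamiltonCycle_of_adj hfour hδ h0.symm)
    · exact (h.rotate 2).not_adj_opposite hfour h2.symm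
  have hupdate := h.update_one hfour hw h0 h2
  constructor
  · intro h3
    exact hno ((hupdate.rotate 2).hasEvenHamiltonCycle_of_adj hfour hδ (by simpa using h3.symm))
  · intro h5
    exact hno (hupdate.hasEvenHamiltonCycle_of_adj hfour hδ (by simpa using h5))

lemma card_filter_adj_le_three (h : IsOddHexagon G g x) (hfour : FourWalksEven G g)
    (hδ : Fintype.card V + 4 ≤ 2 * G.minDegree) (hno : ¬ HasEvenHamiltonCycle G g) (w : V) :
    #{i | G.Adj w (x i)} ≤ 3 := by
  have hcard {S : Finset (Fin 6)} (hS : ∀ i ∈ S, i + 2 ∈ S → i + 3 ∉ S ∧ i + 5 ∉ S) :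
      #S ≤ 3 := by
    decide +revert
  refine hcard fun i hi hi2 ↦ ?_
  simp only [mem_filter_univ] at hi hi2 ⊢
  simpa only [add_comm] using (h.rotate i).not_adj_of_adj_of_adj hfour hδ hno
    (by simpa only [zero_add] using hi) (by simpa only [add_comm] using hi2)

theorem hasEvenHamiltonCycle (h : IsOddHexagon G g x)
    (hδ : Fintype.card V + 4 ≤ 2 * G.minDegree) : HasEvenHamiltonCycle G g := by
  by_contra hno
  have hfour := (fourWalksEven_or_hasEvenHamiltonCycle hδ g).resolve_right hno
  have hlower : 6 * G.minDegree ≤ ∑ i, G.degree (x i) := by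
    simpa using card_nsmul_le_sum univ (fun i ↦ G.degree (x i)) _
      fun i _ ↦ G.minDegree_le_degree (x i)
  have hupper : ∑ i, G.degree (x i) ≤ Fintype.card V * 3 := by
    calc ∑ i, G.degree (x i) = ∑ w, #{i | G.Adj w (x i)} := by
          simp only [← card_neighborFinset_eq_degree, neighborFinset_eq_filter, G.adj_comm (x _)]
          exact sum_card_bipartiteAbove_eq_sum_card_bipartiteBelow _
      _ ≤ Fintype.card V * 3 :=
          sum_le_card_nsmul univ _ 3 fun w _ ↦ h.card_filter_adj_le_three hfour hδ hno w
  omega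

end IsOddHexagon

end Hexagon

section Coloring

lemma sum_map_ite_one_zero {α R : Type*} [AddCommMonoidWithOne R] (l : List α) (P : α → Prop)
    [DecidablePred P] :
    (l.map fun a ↦ if P a then (1 : R) else 0).sum = (l.filter P).length := by
  induction l with
  | nil => simp
  | cons a l ih => by_cases h : P a <;> simp [h, ih, add_comm]

lemma even_length_filter_eq_of_even_length {α : Type*} {χ : α → Fin 2} {l : List α}
    (hl : Even l.length) {k : Fin 2} (hk : Even (l.filter (χ · = k)).length) (c : Fin 2) :
    Even (l.filter (χ · = c)).length := by
  by_cases hck : c = k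
  · rwa [hck]
  · have hcompl : l.filter (χ · = c) = l.filter (fun a ↦ !decide (χ a = k)) :=
      List.filter_congr fun a _ ↦ by rw [← decide_not, decide_eq_decide]; omega
    rw [List.length_eq_length_filter_add (χ · = k), Nat.even_add] at hl
    rwa [hcompl, ← hl]

end Coloring

end EvenHamilton

theorem even_hamilton_of_odd_C6_general {V κ : Type*} [Fintype V] [DecidableEq V] [DecidableEq κ]
    (G : SimpleGraph V) [DecidableRel G.Adj] (hδ : Fintype.card V + 4 ≤ 2 * G.minDegree)
    (χ : Sym2 V → κ) (k : κ) (x : Fin 6 → V) (hx : Function.Injective x)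
    (hadj : ∀ i, G.Adj (x i) (x (i + 1)))
    (hodd : Odd ((List.ofFn fun i ↦ s(x i, x (i + 1))).filter (χ · = k)).length) :
    ∃ (a : V) (w : G.Walk a a), w.IsHamiltonianCycle ∧
      Even (w.edges.filter (χ · = k)).length := by
  have hhex : EvenHamilton.IsOddHexagon G (fun e ↦ if χ e = k then 1 else 0) x := by
    refine ⟨hx, hadj, ?_⟩
    rwa [← ZMod.natCast_eq_one_iff_odd, ← EvenHamilton.sum_map_ite_one_zero, List.map_ofFn,
      List.sum_ofFn] at hodd
  obtain ⟨a, w, hw, hsum⟩ := hhex.hasEvenHamiltonCycle hδ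
  exact ⟨a, w, hw, by rwa [← ZMod.natCast_eq_zero_iff_even, ← EvenHamilton.sum_map_ite_one_zero]⟩

/-- **Proposition.** Let `n ≥ 4` be even and `G` an `n`-vertex graph with
`δ(G) ≥ n/2 + 2`, whose edges are 2-colored by `χ`. If `G` contains an
odd-chromatic copy of `C₆`, then `G` contains an even-chromatic Hamilton
cycle. -/
theorem even_hamilton_of_odd_C6 (n : ℕ) (hn : 4 ≤ n) (hne : Even n)
    (G : SimpleGraph (Fin n)) [DecidableRel G.Adj]
    (hδ : n / 2 + 2 ≤ G.minDegree)
    (χ : Sym2 (Fin n) → Fin 2)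
    (hC6 : ∃ a b c d e f : Fin n,
      a ≠ b ∧ a ≠ c ∧ a ≠ d ∧ a ≠ e ∧ a ≠ f ∧
      b ≠ c ∧ b ≠ d ∧ b ≠ e ∧ b ≠ f ∧
      c ≠ d ∧ c ≠ e ∧ c ≠ f ∧ d ≠ e ∧ d ≠ f ∧ e ≠ f ∧
      G.Adj a b ∧ G.Adj b c ∧ G.Adj c d ∧ G.Adj d e ∧ G.Adj e f ∧ G.Adj f a ∧
      ∃ col : Fin 2,
        Odd (([s(a, b), s(b, c), s(c, d), s(d, e), s(e, f), s(f, a)].filter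
          (fun e => χ e = col)).length)) :
    ∃ (a : Fin n) (w : G.Walk a a), w.IsHamiltonianCycle ∧
      ∀ c : Fin 2, Even ((w.edges.filter (fun e => χ e = c)).length) := by
  obtain ⟨a, b, c, d, e, f, hab, hac, had, hae, haf, hbc, hbd, hbe, hbf, hcd, hce, hcf, hde, hdf,
    hef, gab, gbc, gcd, gde, gef, gfa, k, hodd⟩ := hC6
  have hδ' : Fintype.card (Fin n) + 4 ≤ 2 * G.minDegree := by
    rw [Fintype.card_fin]
    grind
  have hx : Function.Injective ![a, b, c, d, e, f] := by
    rw [← List.nodup_ofFn]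
    simp [*]
  have hadj (i : Fin 6) : G.Adj (![a, b, c, d, e, f] i) (![a, b, c, d, e, f] (i + 1)) := by
    fin_cases i <;> assumption
  obtain ⟨v, w, hw, heven⟩ :=
    even_hamilton_of_odd_C6_general G hδ' χ k ![a, b, c, d, e, f] hx hadj hodd
  refine ⟨v, w, hw, EvenHamilton.even_length_filter_eq_of_even_length ?_ heven⟩
  rwa [w.length_edges, hw.length_eq, Fintype.card_fin]
end
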